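/- arXiv:1209.4972 — 2 statements merged into one kernel-verified Lean document; each statement's English description precedes it below -/
import Mathlib

section
/- The binomial edge ideal J_G is a complete intersection ideal if and only if every connected component of G is a path graph. -/
open MvPolynomial

noncomputable section

/-- The binomial edge ideal of a simple graph `G` on vertex type `V`, inside the
polynomial ring `K[x_i, y_i : i ∈ V]`, modelled as `MvPolynomial (V ⊕ V) K`
with `x_i = X (Sum.inl i)` and `y_i = X (Sum.inr i)`. -/
def binomialEdgeIdeal (K : Type*) [Field K] {V : Type*} (G : SimpleGraph V) :
    Ideal (MvPolynomial (V ⊕ V) K) :=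
  Ideal.span { f | ∃ i j : V, G.Adj i j ∧
    f = X (Sum.inl i) * X (Sum.inr j) - X (Sum.inl j) * X (Sum.inr i) }

/-- The minimal number of generators of an ideal. -/
def mu {R : Type*} [CommRing R] (J : Ideal R) : ℕ :=
  sInf {k | ∃ s : Finset R, s.card = k ∧ Ideal.span (s : Set R) = J}

/-- The height of an ideal: the infimum of the heights of the primes containing it. -/
def htI {R : Type*} [CommRing R] (I : Ideal R) : ℕ∞ :=
  ⨅ (P : PrimeSpectrum R) (_ : I ≤ P.asIdeal), Order.height P

/-- An ideal is unmixed if all of its minimal primes have height equal to its height. -/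
def IsUnmixed {R : Type*} [CommRing R] (I : Ideal R) : Prop :=
  ∀ P ∈ I.minimalPrimes, htI P = htI I

/-- The depth of a ring `R` with respect to an ideal `m`: the supremum of the
lengths of regular sequences on `R` consisting of elements of `m`. -/
def ringDepth (R : Type*) [CommRing R] (m : Ideal R) : ℕ∞ :=
  sSup {d : ℕ∞ | ∃ l : List R, (l.length : ℕ∞) = d ∧ (∀ x ∈ l, x ∈ m) ∧
    RingTheory.Sequence.IsRegular R l}

/-- The graded maximal ideal of the quotient of a polynomial ring by an ideal `J`:
the image of the ideal generated by all the variables. -/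
def gradedMaxQuot {K σ : Type*} [Field K] (J : Ideal (MvPolynomial σ K)) :
    Ideal (MvPolynomial σ K ⧸ J) :=
  (Ideal.span (Set.range (X : σ → MvPolynomial σ K))).map (Ideal.Quotient.mk J)

/-- `S/J` is Cohen–Macaulay: its depth with respect to the graded maximal ideal
equals its Krull dimension. -/
def IsCMQuot {K σ : Type*} [Field K] (J : Ideal (MvPolynomial σ K)) : Prop :=
  (ringDepth (MvPolynomial σ K ⧸ J) (gradedMaxQuot J) : WithBot ℕ∞) =
    ringKrullDim (MvPolynomial σ K ⧸ J)

/-- A graph is a path graph if its vertices can be ordered `v_1, …, v_m` so that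
its edges are exactly `{v_i, v_{i+1}}` for `1 ≤ i ≤ m - 1`. -/
def IsPathGraph {V : Type*} (H : SimpleGraph V) : Prop :=
  ∃ (m : ℕ) (e : V ≃ Fin m), ∀ a b : V,
    H.Adj a b ↔ ((e a : ℕ) + 1 = (e b : ℕ) ∨ (e b : ℕ) + 1 = (e a : ℕ))

/-- The vertex set of a connected component, as a set of vertices. -/
def compSupp {V : Type*} (G : SimpleGraph V) (c : G.ConnectedComponent) : Set V :=
  {v | G.connectedComponentMk v = c}

end

noncomputable section

/-!
Let `f_e` be the binomial of an edge `e`. The `f_e` are linearly independent forms of one degree,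
so `J_G` has exactly `#E` minimal generators, and the question is when `#E ≤ height J_G`.

A prime that avoids all `x_v` and contains `f_uv` and `f_vw` contains `f_uw`. Hence a minimal prime
over the ideal of a spanning forest that avoids all `x_v` contains `J_G`, and its height is at most
the number of edges of the forest; so `G` has no cycle. Moreover `J_G` lies in the ideal generated
by `x_v`, `y_v` and the binomials of the edges not at `v`; so `v` has at most two neighbours.

Conversely, lay disjoint paths out on the integers and let `P` be a prime containing `J_G`. The
ideals generated by the polynomials of `P` in the variables of the first `t` vertices form a chain
of primes below `P`. When the vertex after `u` is added and is joined to `u`, the binomial of the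
new edge is new in the chain, unless `x_u` and `y_u` both lie in `P`; but then the height rose by at
least two when `u` was added, once more than needed there.
-/

section Height

variable {R : Type*} [CommRing R]

theorem mu_eq_spanFinrank (I : Ideal R) : mu I = I.spanFinrank := by
  rw [mu, Submodule.spanFinrank_eq_iInf, iInf]
  congr 1
  ext k
  simp only [Set.mem_ofPred_eq, Set.mem_range, Subtype.exists]
  exact ⟨fun ⟨s, hk, hs⟩ => ⟨s, hs, hk⟩, fun ⟨s, hs, hk⟩ => ⟨s, hk, hs⟩⟩

theorem le_height_of_forall_isPrime {I : Ideal R} {n : ℕ∞}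
    (h : ∀ P : Ideal R, P.IsPrime → I ≤ P → n ≤ P.height) : n ≤ I.height := by
  rw [Ideal.height_eq_inf_minimalPrimes]
  exact le_iInf₂ fun P hP => h P hP.isPrime hP.1.2

theorem htI_eq_height (I : Ideal R) : htI I = I.height := by
  refine le_antisymm (le_height_of_forall_isPrime fun P hP hIP => ?_) (le_iInf₂ fun P hIP => ?_)
  · rw [PrimeSpectrum.height_eq_orderHeight ⟨P, hP⟩]
    exact iInf₂_le (⟨P, hP⟩ : PrimeSpectrum R) hIP
  · rw [← PrimeSpectrum.height_eq_orderHeight]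
    exact Ideal.height_mono hIP

end Height

section HomogeneousGenerators

variable {R σ : Type*} [CommRing R] {d : ℕ} {s : Set (MvPolynomial σ R)}

theorem homogeneousComponent_mul_of_isHomogeneous (p : MvPolynomial σ R) {g : MvPolynomial σ R}
    (hg : g.IsHomogeneous d) : homogeneousComponent d (p * g) = constantCoeff p • g := by
  let : GradedAlgebra (homogeneousSubmodule σ R) := gradedAlgebra
  have h := DirectSum.coe_decompose_mul_add_of_right_mem (homogeneousSubmodule σ R)
    (i := 0) (a := p) ((mem_homogeneousSubmodule d g).2 hg)
  rw [zero_add] at h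
  rw [smul_eq_C_mul, constantCoeff_eq, ← homogeneousComponent_zero,
    ← decomposition.decompose'_apply, ← decomposition.decompose'_apply]
  exact h

theorem homogeneousComponent_mul_of_mem_span (hs : ∀ f ∈ s, f.IsHomogeneous d)
    (p : MvPolynomial σ R) {g : MvPolynomial σ R} (hg : g ∈ Ideal.span s) :
    homogeneousComponent d (p * g) = constantCoeff p • homogeneousComponent d g := by
  induction hg using Submodule.span_induction generalizing p with
  | mem g hg =>
    rw [homogeneousComponent_mul_of_isHomogeneous p (hs g hg),
      homogeneousComponent_eq_self (hs g hg)]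
  | zero => simp
  | add g g' _ _ h h' => rw [mul_add, map_add, map_add, h, h', smul_add]
  | smul a g _ h => rw [smul_eq_mul, ← mul_assoc, h, h, map_mul, mul_smul]

/-- The part of degree `d`, on the ideal generated by a set of forms of degree `d`. Since `d` is the
lowest degree of the ideal, this is semilinear along the constant coefficient, and so turns
generators of the ideal into generators of the span of `s` over `R`. -/
def initialPart (hs : ∀ f ∈ s, f.IsHomogeneous d) :
    Ideal.span s →ₛₗ[(constantCoeff : MvPolynomial σ R →+* R)] MvPolynomial σ R where
  toFun g := homogeneousComponent d g.1
  map_add' g g' := map_add _ g.1 g'.1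
  map_smul' p g := homogeneousComponent_mul_of_mem_span hs p g.2

theorem spanFinrank_span_le_spanFinrank_idealSpan (hs : s.Finite)
    (hd : ∀ f ∈ s, f.IsHomogeneous d) :
    (Submodule.span R s).spanFinrank ≤ (Ideal.span s).spanFinrank := by
  have : RingHomSurjective (constantCoeff : MvPolynomial σ R →+* R) :=
    ⟨fun r => ⟨C r, constantCoeff_C σ r⟩⟩
  have himage : initialPart hd '' (Subtype.val ⁻¹' s) = s := by
    ext f
    constructor
    · rintro ⟨g, hg, rfl⟩
      simpa [initialPart, homogeneousComponent_eq_self (hd _ hg)] using hg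
    · exact fun hf => ⟨⟨f, Ideal.subset_span hf⟩, hf, homogeneousComponent_eq_self (hd f hf)⟩
  calc (Submodule.span R s).spanFinrank
      = (Submodule.map (initialPart hd) ⊤).spanFinrank := by
        rw [← Submodule.span_span_coe_preimage, Submodule.map_span, himage]
    _ ≤ (⊤ : Submodule (MvPolynomial σ R) (Ideal.span s)).spanFinrank :=
        Submodule.spanFinrank_map_le_of_fg _ ((Submodule.fg_top _).2 (Submodule.fg_span hs))
    _ = (Ideal.span s).spanFinrank := Submodule.spanFinrank_top _

theorem spanFinrank_idealSpan_image [Nontrivial R] {ι : Type*} {f : ι → MvPolynomial σ R}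
    {t : Set ι} (ht : t.Finite) (hd : ∀ i ∈ t, (f i).IsHomogeneous d) (hf : LinearIndepOn R f t) :
    (Ideal.span (f '' t)).spanFinrank = t.ncard := by
  rw [← hf.injOn.ncard_image]
  refine le_antisymm (Submodule.spanFinrank_span_le_ncard_of_finite (ht.image f)) ?_
  calc (f '' t).ncard = (Submodule.span R (f '' t)).spanFinrank := by
        rw [Submodule.spanFinrank, Submodule.spanRank_span_of_linearIndepOn _ hf.id_image,
          ← Set.cast_ncard (ht.image f), Cardinal.toNat_natCast]
    _ ≤ (Ideal.span (f '' t)).spanFinrank :=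
        spanFinrank_span_le_spanFinrank_idealSpan (ht.image f) (Set.forall_mem_image.2 hd)

end HomogeneousGenerators

section EdgeBinomial

variable {R K V : Type*} [CommRing R] [Field K] {G : SimpleGraph V}

/-- The binomial `x_i y_j - x_j y_i` attached to an ordered pair of vertices. -/
def edgeBinomial (R : Type*) [CommRing R] {V : Type*} (i j : V) : MvPolynomial (V ⊕ V) R :=
  X (Sum.inl i) * X (Sum.inr j) - X (Sum.inl j) * X (Sum.inr i)

theorem edgeBinomial_swap (i j : V) : edgeBinomial R j i = -edgeBinomial R i j := by
  simp only [edgeBinomial]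
  ring

theorem isHomogeneous_edgeBinomial (i j : V) : (edgeBinomial R i j).IsHomogeneous 2 :=
  ((isHomogeneous_X R _).mul (isHomogeneous_X R _)).sub
    ((isHomogeneous_X R _).mul (isHomogeneous_X R _))

theorem coeff_X_mul_X (i j k l : V) [Decidable (k = i ∧ l = j)] :
    coeff (Finsupp.single (Sum.inl i) 1 + Finsupp.single (Sum.inr j) 1)
      (X (Sum.inl k) * X (Sum.inr l) : MvPolynomial (V ⊕ V) R) =
    if k = i ∧ l = j then 1 else 0 := by
  classical
  rw [X, X, monomial_mul, one_mul, coeff_monomial]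
  congr 1
  refine propext ⟨fun h => ?_, fun h => by rw [h.1, h.2]⟩
  have hi := DFunLike.congr_fun h (Sum.inl i)
  have hj := DFunLike.congr_fun h (Sum.inr j)
  simpa [Finsupp.single_apply] using And.intro hi hj

open Classical in
theorem coeff_edgeBinomial (i j k l : V) :
    coeff (Finsupp.single (Sum.inl i) 1 + Finsupp.single (Sum.inr j) 1) (edgeBinomial R k l) =
      (if k = i ∧ l = j then 1 else 0) - if l = i ∧ k = j then 1 else 0 := by
  rw [edgeBinomial, coeff_sub, coeff_X_mul_X, coeff_X_mul_X]

/-- The binomial attached to an edge. Its sign depends on the orientation of the edge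
chosen by `Quot.out`. -/
def edgeGenerator (R : Type*) [CommRing R] {V : Type*} (e : Sym2 V) : MvPolynomial (V ⊕ V) R :=
  edgeBinomial R e.out.1 e.out.2

theorem sym2_mk_out (e : Sym2 V) : s(e.out.1, e.out.2) = e :=
  Quot.out_eq e

theorem linearIndepOn_edgeGenerator :
    LinearIndepOn R (edgeGenerator R) {e : Sym2 V | ¬e.IsDiag} := by
  classical
  let leadingCoeff (e : Sym2 V) : Module.Dual R (MvPolynomial (V ⊕ V) R) :=
    lcoeff R (Finsupp.single (Sum.inl e.out.1) 1 + Finsupp.single (Sum.inr e.out.2) 1)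
  refine LinearIndependent.of_pairwise_dual_eq_zero_one _ (fun e => leadingCoeff e.1)
    (fun e e' hne => ?_) fun e => ?_
  · have hne' : s(e'.1.out.1, e'.1.out.2) ≠ s(e.1.out.1, e.1.out.2) := by
      simpa only [sym2_mk_out] using fun h => hne (Subtype.ext h.symm)
    rw [Ne, Sym2.eq_iff, not_or] at hne'
    simp [leadingCoeff, edgeGenerator, coeff_edgeBinomial, -not_and, hne'.1, and_comm.not.1 hne'.2]
  · have hdiag : e.1.out.1 ≠ e.1.out.2 := fun h =>
      e.2 (sym2_mk_out e.1 ▸ Sym2.mk_isDiag_iff.2 h)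
    simp [leadingCoeff, edgeGenerator, coeff_edgeBinomial, hdiag]

theorem edgeBinomial_mem_binomialEdgeIdeal {i j : V} (h : G.Adj i j) :
    edgeBinomial K i j ∈ binomialEdgeIdeal K G :=
  Ideal.subset_span ⟨i, j, h, rfl⟩

theorem binomialEdgeIdeal_le_iff {I : Ideal (MvPolynomial (V ⊕ V) K)} :
    binomialEdgeIdeal K G ≤ I ↔ ∀ i j, G.Adj i j → edgeBinomial K i j ∈ I := by
  rw [binomialEdgeIdeal, Ideal.span_le]
  exact ⟨fun h i j hij => h ⟨i, j, hij, rfl⟩, by rintro h _ ⟨i, j, hij, rfl⟩; exact h i j hij⟩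

theorem binomialEdgeIdeal_eq_span_image :
    binomialEdgeIdeal K G = Ideal.span (edgeGenerator K '' G.edgeSet) := by
  refine le_antisymm (binomialEdgeIdeal_le_iff.2 fun i j hij => ?_) (Ideal.span_le.2 ?_)
  · have hmem : edgeGenerator K s(i, j) ∈ Ideal.span (edgeGenerator K '' G.edgeSet) :=
      Ideal.subset_span ⟨s(i, j), hij, rfl⟩
    rw [edgeGenerator] at hmem
    rcases Sym2.eq_iff.1 (sym2_mk_out s(i, j)) with ⟨hi, hj⟩ | ⟨hi, hj⟩
    · rwa [hi, hj] at hmem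
    · rwa [hi, hj, edgeBinomial_swap, neg_mem_iff] at hmem
  · rintro _ ⟨e, he, rfl⟩
    refine edgeBinomial_mem_binomialEdgeIdeal ?_
    rwa [← SimpleGraph.mem_edgeSet, sym2_mk_out]

theorem spanFinrank_binomialEdgeIdeal [Finite V] :
    (binomialEdgeIdeal K G).spanFinrank = G.edgeSet.ncard := by
  rw [binomialEdgeIdeal_eq_span_image]
  exact spanFinrank_idealSpan_image G.edgeSet.toFinite (fun e _ => isHomogeneous_edgeBinomial _ _)
    (linearIndepOn_edgeGenerator.mono fun e he => G.not_isDiag_of_mem_edgeSet he)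

end EdgeBinomial

section UpperBounds

variable {R K V : Type*} [CommRing R] [Field K] {G H : SimpleGraph V}

theorem binomialEdgeIdeal_le_ker_constantCoeff (G : SimpleGraph V) :
    binomialEdgeIdeal K G ≤ RingHom.ker (constantCoeff : MvPolynomial (V ⊕ V) K →+* K) :=
  binomialEdgeIdeal_le_iff.2 fun i j _ => by simp [edgeBinomial, RingHom.mem_ker]

theorem height_binomialEdgeIdeal_le_ncard [Finite V] (G : SimpleGraph V) :
    (binomialEdgeIdeal K G).height ≤ G.edgeSet.ncard := by
  rw [← spanFinrank_binomialEdgeIdeal (K := K)]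
  exact Ideal.height_le_spanFinrank _
    (ne_top_of_le_ne_top (RingHom.ker_ne_top _) (binomialEdgeIdeal_le_ker_constantCoeff G))

theorem edgeBinomial_mem_of_reachable {Q : Ideal (MvPolynomial (V ⊕ V) R)}
    [Q.IsPrime] (hH : ∀ u v, H.Adj u v → edgeBinomial R u v ∈ Q) (hx : ∀ v, X (Sum.inl v) ∉ Q)
    {u v : V} (huv : H.Reachable u v) : edgeBinomial R u v ∈ Q := by
  rw [SimpleGraph.reachable_iff_reflTransGen] at huv
  induction huv with
  | refl => simp [edgeBinomial]
  | @tail b c _ hbc ih =>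
    have hplucker : X (Sum.inl b) * edgeBinomial R u c =
        X (Sum.inl u) * edgeBinomial R b c + X (Sum.inl c) * edgeBinomial R u b := by
      simp only [edgeBinomial]
      ring
    have hmem : X (Sum.inl b) * edgeBinomial R u c ∈ Q :=
      hplucker ▸ add_mem (Q.mul_mem_left _ (hH b c hbc)) (Q.mul_mem_left _ ih)
    exact (Ideal.IsPrime.mem_or_mem ‹_› hmem).resolve_left (hx b)

variable (K) in
theorem exists_minimalPrimes_forall_X_notMem (H : SimpleGraph V) :
    ∃ Q ∈ (binomialEdgeIdeal K H).minimalPrimes, ∀ v, X (Sum.inl v) ∉ Q := by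
  let P : Ideal (MvPolynomial (V ⊕ V) K) :=
    RingHom.ker (aeval (Sum.elim (fun _ => 1) fun _ => 0) : MvPolynomial (V ⊕ V) K →ₐ[K] K)
  have hHP : binomialEdgeIdeal K H ≤ P :=
    binomialEdgeIdeal_le_iff.2 fun i j _ => by simp [P, edgeBinomial, RingHom.mem_ker]
  have hP : P.IsPrime := RingHom.ker_isPrime _
  obtain ⟨Q, hQ, hQP⟩ := Ideal.exists_minimalPrimes_le hHP
  exact ⟨Q, hQ, fun v hv => by simpa [P, RingHom.mem_ker] using hQP hv⟩

theorem height_binomialEdgeIdeal_le_of_reachable [Finite V]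
    (h : ∀ u v, G.Adj u v → H.Reachable u v) :
    (binomialEdgeIdeal K G).height ≤ H.edgeSet.ncard := by
  obtain ⟨Q, hQ, hx⟩ := exists_minimalPrimes_forall_X_notMem K H
  have := hQ.isPrime
  have hGQ : binomialEdgeIdeal K G ≤ Q := binomialEdgeIdeal_le_iff.2 fun u v huv =>
    edgeBinomial_mem_of_reachable (binomialEdgeIdeal_le_iff.1 hQ.1.2) hx (h u v huv)
  rw [binomialEdgeIdeal_eq_span_image] at hQ
  calc (binomialEdgeIdeal K G).height ≤ Q.height := Ideal.height_mono hGQ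
    _ ≤ (edgeGenerator K '' H.edgeSet).ncard :=
        Ideal.height_le_card_of_mem_minimalPrimes_span (H.edgeSet.toFinite.image _) hQ
    _ ≤ H.edgeSet.ncard := Nat.cast_le.2 (Set.ncard_image_le H.edgeSet.toFinite)

theorem isAcyclic_of_ncard_edgeSet_le_height [Finite V]
    (h : G.edgeSet.ncard ≤ (binomialEdgeIdeal K G).height) : G.IsAcyclic := by
  obtain ⟨F, hFG, hF, hreach⟩ := G.exists_isAcyclic_reachable_eq_le
  have hcard : G.edgeSet.ncard ≤ F.edgeSet.ncard := Nat.cast_le.1 <|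
    h.trans (height_binomialEdgeIdeal_le_of_reachable fun u v huv => hreach ▸ huv.reachable)
  have hedges : F.edgeSet = G.edgeSet :=
    Set.eq_of_subset_of_ncard_le (SimpleGraph.edgeSet_mono hFG) hcard
  rwa [← SimpleGraph.edgeSet_inj.1 hedges]

theorem binomialEdgeIdeal_le_span_pair_sup (G : SimpleGraph V) (v : V) :
    binomialEdgeIdeal K G ≤ Ideal.span {X (Sum.inl v), X (Sum.inr v)} ⊔
      binomialEdgeIdeal K (G.deleteIncidenceSet v) := by
  set J := Ideal.span {X (Sum.inl v), X (Sum.inr v)} ⊔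
    binomialEdgeIdeal K (G.deleteIncidenceSet v)
  have hx : X (Sum.inl v) ∈ J := Ideal.mem_sup_left (Ideal.subset_span (by simp))
  have hy : X (Sum.inr v) ∈ J := Ideal.mem_sup_left (Ideal.subset_span (by simp))
  refine binomialEdgeIdeal_le_iff.2 fun i j hij => ?_
  by_cases hi : i = v
  · subst hi
    exact sub_mem (J.mul_mem_right _ hx) (J.mul_mem_left _ hy)
  by_cases hj : j = v
  · subst hj
    exact sub_mem (J.mul_mem_left _ hy) (J.mul_mem_right _ hx)
  · exact Ideal.mem_sup_right (edgeBinomial_mem_binomialEdgeIdeal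
      (SimpleGraph.deleteIncidenceSet_adj.2 ⟨hij, hi, hj⟩))

theorem height_binomialEdgeIdeal_le_two_add [Finite V] (G : SimpleGraph V) (v : V) :
    (binomialEdgeIdeal K G).height ≤ (2 + (G.edgeSet \ G.incidenceSet v).ncard : ℕ) := by
  set S : Set (MvPolynomial (V ⊕ V) K) := {X (Sum.inl v), X (Sum.inr v)}
  set E := (G.deleteIncidenceSet v).edgeSet with hE
  have hspan : Ideal.span (S ∪ edgeGenerator K '' E) =
      Ideal.span S ⊔ binomialEdgeIdeal K (G.deleteIncidenceSet v) := by
    rw [Ideal.span_union, ← binomialEdgeIdeal_eq_span_image]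
  have hne : Ideal.span (S ∪ edgeGenerator K '' E) ≠ ⊤ := by
    refine ne_top_of_le_ne_top (RingHom.ker_ne_top constantCoeff) ?_
    rw [hspan, sup_le_iff, Ideal.span_le]
    exact ⟨by simp [S, Set.pair_subset_iff, RingHom.mem_ker],
      binomialEdgeIdeal_le_ker_constantCoeff _⟩
  have hcard : (S ∪ edgeGenerator K '' E).ncard ≤ 2 + (G.edgeSet \ G.incidenceSet v).ncard := by
    rw [← SimpleGraph.edgeSet_deleteIncidenceSet, ← hE]
    exact (Set.ncard_union_le _ _).trans
      (add_le_add ((Set.ncard_insert_le _ _).trans (by simp)) (Set.ncard_image_le E.toFinite))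
  have hfin : (S ∪ edgeGenerator K '' E).Finite := (Set.toFinite S).union (E.toFinite.image _)
  calc (binomialEdgeIdeal K G).height
      ≤ (Ideal.span (S ∪ edgeGenerator K '' E)).height :=
        Ideal.height_mono (hspan ▸ binomialEdgeIdeal_le_span_pair_sup G v)
    _ ≤ (Ideal.span (S ∪ edgeGenerator K '' E)).spanFinrank := Ideal.height_le_spanFinrank _ hne
    _ ≤ (2 + (G.edgeSet \ G.incidenceSet v).ncard : ℕ) :=
        Nat.cast_le.2 ((Submodule.spanFinrank_span_le_ncard_of_finite hfin).trans hcard)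

theorem ncard_neighborSet_le_two_of_ncard_edgeSet_le_height [Finite V]
    (h : G.edgeSet.ncard ≤ (binomialEdgeIdeal K G).height) (v : V) :
    (G.neighborSet v).ncard ≤ 2 := by
  have hle : G.edgeSet.ncard ≤ 2 + (G.edgeSet \ G.incidenceSet v).ncard :=
    Nat.cast_le.1 <| h.trans (height_binomialEdgeIdeal_le_two_add G v)
  rw [← Set.ncard_sdiff_add_ncard_of_subset (G.incidenceSet_subset v)] at hle
  have hcard : (G.neighborSet v).ncard = (G.incidenceSet v).ncard := by
    classical
    exact (Nat.card_congr (G.incidenceSetEquivNeighborSet v)).symm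
  omega

end UpperBounds

section ExtendedContraction

variable {R σ : Type*} [CommRing R] {P : Ideal (MvPolynomial σ R)} {T T' : Set σ}

open Classical in
/-- The map to polynomials over `R[σ] / P` that reduces the variables in `T` modulo `P` and keeps
the other ones as variables. -/
def reduceVariables (P : Ideal (MvPolynomial σ R)) (T : Set σ) :
    MvPolynomial σ R →ₐ[R] MvPolynomial σ (MvPolynomial σ R ⧸ P) :=
  aeval fun i => if i ∈ T then C (Ideal.Quotient.mk P (X i)) else X i

/-- The ideal of `R[σ]` generated by the elements of `P` that only involve the variables in `T`.
It is defined as a kernel, which makes it prime when `P` is; varying `T` gives chains of primes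
below `P`. -/
def extendedContraction (P : Ideal (MvPolynomial σ R)) (T : Set σ) : Ideal (MvPolynomial σ R) :=
  RingHom.ker (reduceVariables P T)

theorem reduceVariables_X_of_mem {i : σ} (hi : i ∈ T) :
    reduceVariables P T (X i) = C (Ideal.Quotient.mk P (X i)) := by
  rw [reduceVariables, aeval_X, if_pos hi]

theorem reduceVariables_X_of_notMem {i : σ} (hi : i ∉ T) : reduceVariables P T (X i) = X i := by
  rw [reduceVariables, aeval_X, if_neg hi]

theorem reduceVariables_of_mem_supported {f : MvPolynomial σ R} (hf : f ∈ supported R T) :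
    reduceVariables P T f = C (Ideal.Quotient.mk P f) := by
  have heq : Set.EqOn (reduceVariables P T)
      ((Algebra.ofId (MvPolynomial σ R ⧸ P) _).restrictScalars R |>.comp
        (Ideal.Quotient.mkₐ R P)) (X '' T) := by
    rintro _ ⟨i, hi, rfl⟩
    exact reduceVariables_X_of_mem hi
  rw [supported_eq_adjoin_X] at hf
  exact AlgHom.eqOn_adjoin_iff.2 heq hf

theorem mem_extendedContraction_iff_of_mem_supported {f : MvPolynomial σ R}
    (hf : f ∈ supported R T) : f ∈ extendedContraction P T ↔ f ∈ P := by
  rw [extendedContraction, RingHom.mem_ker, reduceVariables_of_mem_supported hf, C_eq_zero,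
    Ideal.Quotient.eq_zero_iff_mem]

theorem X_mem_supported_of_mem {i : σ} (hi : i ∈ T) : (X i : MvPolynomial σ R) ∈ supported R T := by
  rw [supported_eq_adjoin_X]
  exact Algebra.subset_adjoin ⟨i, hi, rfl⟩

theorem X_mem_extendedContraction {i : σ} (hi : i ∈ T) (hP : X i ∈ P) :
    X i ∈ extendedContraction P T :=
  (mem_extendedContraction_iff_of_mem_supported (X_mem_supported_of_mem hi)).2 hP

theorem X_notMem_extendedContraction [P.IsPrime] {i : σ} (hi : i ∉ T) :
    X i ∉ extendedContraction P T := by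
  rw [extendedContraction, RingHom.mem_ker, reduceVariables_X_of_notMem hi]
  exact X_ne_zero i

theorem isPrime_extendedContraction [P.IsPrime] (T : Set σ) : (extendedContraction P T).IsPrime :=
  RingHom.ker_isPrime _

theorem extendedContraction_mono (P : Ideal (MvPolynomial σ R)) :
    Monotone (extendedContraction P) := by
  classical
  intro T T' hT f hf
  let reduceRest : MvPolynomial σ (MvPolynomial σ R ⧸ P) →ₐ[MvPolynomial σ R ⧸ P]
      MvPolynomial σ (MvPolynomial σ R ⧸ P) :=
    aeval fun i => if i ∈ T' then C (Ideal.Quotient.mk P (X i)) else X i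
  have hcomp : (reduceRest.restrictScalars R).comp (reduceVariables P T) =
      reduceVariables P T' := by
    refine algHom_ext fun i => ?_
    by_cases hi : i ∈ T
    · simp [reduceVariables, reduceRest, hi, hT hi, ← algebraMap_eq]
    · simp [reduceVariables, reduceRest, hi]
  rw [extendedContraction, RingHom.mem_ker] at hf ⊢
  rw [← hcomp, AlgHom.comp_apply, hf, map_zero]

theorem extendedContraction_le (P : Ideal (MvPolynomial σ R)) (T : Set σ) :
    extendedContraction P T ≤ P := fun f hf =>
  (mem_extendedContraction_iff_of_mem_supported (by simp [supported_univ])).1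
    (extendedContraction_mono P (Set.subset_univ T) hf)

theorem height_extendedContraction_add_one_le [P.IsPrime] (hT : T ⊆ T') {f : MvPolynomial σ R}
    (hf : f ∉ extendedContraction P T) (hf' : f ∈ extendedContraction P T') :
    (extendedContraction P T).height + 1 ≤ (extendedContraction P T').height := by
  have := isPrime_extendedContraction (P := P) T
  have := isPrime_extendedContraction (P := P) T'
  exact Ideal.height_add_one_le_of_lt_of_isPrime
    (lt_of_le_not_ge (extendedContraction_mono P hT) fun h => hf (h hf'))

theorem height_extendedContraction_add_two_le [P.IsPrime] (hT : T ⊆ T') {i j : σ} (hij : i ≠ j)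
    (hi : i ∈ T' \ T) (hj : j ∈ T' \ T) (hiP : X i ∈ P) (hjP : X j ∈ P) :
    (extendedContraction P T).height + 2 ≤ (extendedContraction P T').height :=
  calc (extendedContraction P T).height + 2
      = (extendedContraction P T).height + 1 + 1 := by rw [add_assoc, one_add_one_eq_two]
    _ ≤ (extendedContraction P (insert i T)).height + 1 := by
        gcongr
        exact height_extendedContraction_add_one_le (Set.subset_insert i T)
          (X_notMem_extendedContraction hi.2)
          (X_mem_extendedContraction (Set.mem_insert i T) hiP)
    _ ≤ (extendedContraction P T').height :=
        height_extendedContraction_add_one_le (Set.insert_subset hi.1 hT)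
          (X_notMem_extendedContraction fun h => h.elim hij.symm hj.2)
          (X_mem_extendedContraction hj.1 hjP)

end ExtendedContraction

section EdgeContraction

variable {R V : Type*} [CommRing R] {P : Ideal (MvPolynomial (V ⊕ V) R)} {T : Set (V ⊕ V)}
  {u v : V}

theorem edgeBinomial_mem_extendedContraction (hxu : Sum.inl u ∈ T) (hyu : Sum.inr u ∈ T)
    (hxv : Sum.inl v ∈ T) (hyv : Sum.inr v ∈ T) (h : edgeBinomial R u v ∈ P) :
    edgeBinomial R u v ∈ extendedContraction P T :=
  (mem_extendedContraction_iff_of_mem_supported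
    (sub_mem (mul_mem (X_mem_supported_of_mem hxu) (X_mem_supported_of_mem hyv))
      (mul_mem (X_mem_supported_of_mem hxv) (X_mem_supported_of_mem hyu)))).2 h

theorem edgeBinomial_notMem_extendedContraction (hxu : Sum.inl u ∈ T) (hyu : Sum.inr u ∈ T)
    (hxv : Sum.inl v ∉ T) (hyv : Sum.inr v ∉ T)
    (h : ¬(X (Sum.inl u) ∈ P ∧ X (Sum.inr u) ∈ P)) :
    edgeBinomial R u v ∉ extendedContraction P T := by
  classical
  intro hmem
  rw [extendedContraction, RingHom.mem_ker, edgeBinomial, map_sub, map_mul, map_mul,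
    reduceVariables_X_of_mem hxu, reduceVariables_X_of_mem hyu, reduceVariables_X_of_notMem hxv,
    reduceVariables_X_of_notMem hyv, mul_comm (X _)] at hmem
  have hx := congrArg (coeff (Finsupp.single (Sum.inr v) 1)) hmem
  have hy := congrArg (coeff (Finsupp.single (Sum.inl v) 1)) hmem
  simp only [coeff_sub, coeff_C_mul, coeff_X, coeff_zero, Finsupp.single_left_inj one_ne_zero,
    reduceCtorEq, if_true, if_false, mul_zero, mul_one, sub_zero, zero_sub, neg_eq_zero,
    Ideal.Quotient.eq_zero_iff_mem] at hx hy
  exact h ⟨hx, hy⟩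

end EdgeContraction

section LowerBound

theorem natCast_count_le_of_steps {h : ℕ → ℕ∞} {p z : ℕ → Prop} [DecidablePred p]
    (hmono : Monotone h) (hz : ∀ t, z t → h t + 2 ≤ h (t + 1))
    (hp : ∀ t, p t → ¬z t → h (t + 1) + 1 ≤ h (t + 2)) (t : ℕ) : Nat.count p t ≤ h (t + 1) := by
  classical
  -- A step with `z t` gains two, which pays in advance for a following step with `p t`.
  suffices hcount : ((Nat.count p t + if z t then 1 else 0 : ℕ) : ℕ∞) ≤ h (t + 1) from
    (Nat.cast_le.2 (Nat.le_add_right _ _)).trans hcount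
  induction t with
  | zero =>
    by_cases hz0 : z 0
    · simpa [hz0] using (one_le_two.trans le_add_self).trans (hz 0 hz0)
    · simp [hz0]
  | succ t ih =>
    by_cases hzt' : z (t + 1)
    · refine le_trans ?_ ((add_le_add_left ih 2).trans (hz (t + 1) hzt'))
      norm_cast
      rw [Nat.count_succ, if_pos hzt']
      split_ifs <;> omega
    rw [if_neg hzt', add_zero, Nat.count_succ]
    by_cases hpt : p t
    · rw [if_pos hpt]
      by_cases hzt : z t
      · rw [if_pos hzt] at ih
        exact ih.trans (hmono (Nat.le_succ _))
      · rw [if_neg hzt, add_zero] at ih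
        rw [Nat.cast_add, Nat.cast_one]
        exact (add_le_add_left ih 1).trans (hp t hpt hzt)
    · rw [if_neg hpt, add_zero]
      exact ((Nat.cast_le.2 (Nat.le_add_right _ _)).trans ih).trans (hmono (Nat.le_succ _))

variable {K V : Type*} [Field K] {G : SimpleGraph V} {r : V → ℕ}

open Classical in
theorem count_consecutive_le_height (r : V → ℕ) {P : Ideal (MvPolynomial (V ⊕ V) K)} [P.IsPrime]
    (hP : binomialEdgeIdeal K G ≤ P) (N : ℕ) :
    Nat.count (fun k => Relation.Map G.Adj r r k (k + 1)) N ≤ P.height := by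
  let T (t : ℕ) : Set (V ⊕ V) := {i | r (Sum.elim id id i) < t}
  have hT : Monotone T := fun s t hst i hi => lt_of_lt_of_le hi hst
  have hcount := natCast_count_le_of_steps (h := fun t => (extendedContraction P (T t)).height)
    (p := fun k => Relation.Map G.Adj r r k (k + 1))
    (z := fun k => ∃ v, r v = k ∧ X (Sum.inl v) ∈ P ∧ X (Sum.inr v) ∈ P)
    (fun s t hst => Ideal.height_mono (extendedContraction_mono P (hT hst))) ?_ ?_ N
  · exact hcount.trans (Ideal.height_mono (extendedContraction_le P _))
  · rintro t ⟨v, rfl, hx, hy⟩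
    exact height_extendedContraction_add_two_le (hT (Nat.le_succ _)) Sum.inl_ne_inr
      (by simp [T]) (by simp [T]) hx hy
  · rintro t ⟨u, v, huv, rfl, hv⟩ hz
    exact height_extendedContraction_add_one_le (hT (Nat.le_succ _))
      (edgeBinomial_notMem_extendedContraction (u := u) (v := v) (by simp [T]) (by simp [T])
        (by simp [T, hv]) (by simp [T, hv]) fun h => hz ⟨u, rfl, h⟩)
      (edgeBinomial_mem_extendedContraction (by simp [T]) (by simp [T]) (by simp [T, hv])
        (by simp [T, hv]) (binomialEdgeIdeal_le_iff.1 hP u v huv))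

open Classical in
theorem ncard_edgeSet_le_count_consecutive (hr : Function.Injective r)
    (hadj : ∀ u v, G.Adj u v → r u + 1 = r v ∨ r v + 1 = r u) {N : ℕ} (hN : ∀ v, r v ≤ N) :
    G.edgeSet.ncard ≤ Nat.count (fun k => Relation.Map G.Adj r r k (k + 1)) N := by
  rw [Nat.count_eq_card_filter_range, ← Set.ncard_coe_finset,
    ← Set.ncard_image_of_injective _ (Sym2.map.injective hr)]
  refine (Set.ncard_le_ncard ?_ (Set.toFinite _)).trans
    (Set.ncard_image_le (f := fun k => s(k, k + 1)) (Set.toFinite _))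
  rintro _ ⟨e, he, rfl⟩
  have hmem {u v : V} (huv : G.Adj u v) (h : r u + 1 = r v) :
      Sym2.map r s(u, v) ∈ (fun k => s(k, k + 1)) '' (((Finset.range N).filter fun k =>
        Relation.Map G.Adj r r k (k + 1) : Finset ℕ) : Set ℕ) := by
    refine ⟨r u, ?_, by simp [h]⟩
    have := hN v
    simp only [Finset.coe_filter, Finset.mem_range, Set.mem_ofPred_eq]
    exact ⟨by omega, u, v, huv, rfl, h.symm⟩
  induction e with
  | _ u v =>
    rcases hadj u v he with h | h
    · exact hmem he h
    · rw [Sym2.eq_swap]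
      exact hmem (G.adj_symm he) h

theorem ncard_edgeSet_le_height_binomialEdgeIdeal [Finite V] (hr : Function.Injective r)
    (hadj : ∀ u v, G.Adj u v → r u + 1 = r v ∨ r v + 1 = r u) :
    G.edgeSet.ncard ≤ (binomialEdgeIdeal K G).height := by
  obtain ⟨N, hN⟩ := (Set.finite_range r).bddAbove
  exact le_height_of_forall_isPrime fun P _ hP =>
    (Nat.cast_le.2 (ncard_edgeSet_le_count_consecutive hr hadj fun v => hN ⟨v, rfl⟩)).trans
      (count_consecutive_le_height r hP N)

end LowerBound

section PathGraph

variable {V : Type*} {G : SimpleGraph V}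

theorem exists_consecutive_ranks_of_isPathGraph [Finite V]
    (h : ∀ c : G.ConnectedComponent, IsPathGraph (G.induce (compSupp G c))) :
    ∃ r : V → ℕ, Function.Injective r ∧
      ∀ u v, G.Adj u v → r u + 1 = r v ∨ r v + 1 = r u := by
  choose m e he using h
  obtain ⟨N, ⟨φ⟩⟩ := Finite.exists_equiv_fin G.ConnectedComponent
  let pos (v : V) : ℕ := e (G.connectedComponentMk v) ⟨v, rfl⟩
  have pos_eq (c : G.ConnectedComponent) (v : V) (hv : G.connectedComponentMk v = c) :
      pos v = e c ⟨v, hv⟩ := by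
    subst hv
    rfl
  obtain ⟨M, hM⟩ := (Set.finite_range pos).bddAbove
  have hpos (v : V) : pos v < M + 1 := Nat.lt_succ_of_le (hM ⟨v, rfl⟩)
  refine ⟨fun v => finProdFinEquiv (φ (G.connectedComponentMk v), ⟨pos v, hpos v⟩), ?_, ?_⟩
  · intro u v huv
    obtain ⟨hφ, hfin⟩ := Prod.ext_iff.1 (finProdFinEquiv.injective (Fin.ext huv))
    have hcomp := φ.injective hφ
    have hpos : pos u = pos v := congrArg Fin.val hfin
    rw [pos_eq _ u hcomp, pos_eq _ v rfl] at hpos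
    exact congrArg Subtype.val ((e _).injective (Fin.ext hpos))
  · intro u v huv
    have hcomp : G.connectedComponentMk u = G.connectedComponentMk v :=
      SimpleGraph.ConnectedComponent.sound huv.reachable
    have hadj := (he (G.connectedComponentMk v) ⟨u, hcomp⟩ ⟨v, rfl⟩).1 huv
    rw [← pos_eq, ← pos_eq] at hadj
    simp only [finProdFinEquiv_apply_val, hcomp]
    omega

theorem adj_getVert_iff_of_isAcyclic (hG : G.IsAcyclic) {u v : V} {p : G.Walk u v} (hp : p.IsPath)
    {i j : ℕ} (hi : i ≤ p.length) (hj : j ≤ p.length) :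
    G.Adj (p.getVert i) (p.getVert j) ↔ i + 1 = j ∨ j + 1 = i := by
  wlog hij : i ≤ j generalizing i j
  · rw [G.adj_comm, this hj hi (by omega), or_comm]
  constructor
  · intro hadj
    have hne : i ≠ j := fun h => hadj.ne (congrArg p.getVert h)
    have hmem : p.getVert j ∈ (p.drop i).support := by
      have := (p.drop i).getVert_mem_support (j - i)
      rwa [SimpleGraph.Walk.drop_getVert, Nat.add_sub_cancel' hij] at this
    have hsnd := hG.eq_snd_of_adj_start (hp.drop i) hadj hmem
    rw [SimpleGraph.Walk.snd, SimpleGraph.Walk.drop_getVert] at hsnd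
    have hi' : i + 1 ≤ p.length := by omega
    exact .inl (hp.getVert_injOn hj hi' hsnd).symm
  · intro h
    obtain rfl : i + 1 = j := by omega
    exact p.adj_getVert_succ (by omega)

theorem mem_support_of_adj_start_of_length_le {u v : V} {p : G.Walk u v} (hp : p.IsPath)
    (hmax : ∀ u' v' (q : G.Walk u' v'), q.IsPath → q.length ≤ p.length) {w : V}
    (hadj : G.Adj u w) : w ∈ p.support := by
  by_contra hw
  have := hmax _ _ (.cons hadj.symm p) (hp.cons hw)
  rw [SimpleGraph.Walk.length_cons] at this
  omega

theorem mem_support_of_adj_getVert [Finite V] {u v : V} {p : G.Walk u v} (hp : p.IsPath) {i : ℕ}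
    (hi0 : 0 < i) (hi : i < p.length) (hdeg : (G.neighborSet (p.getVert i)).ncard ≤ 2) {w : V}
    (hadj : G.Adj (p.getVert i) w) : w ∈ p.support := by
  have hprev : G.Adj (p.getVert i) (p.getVert (i - 1)) := by
    have := p.adj_getVert_succ (i := i - 1) (by omega)
    rw [Nat.sub_add_cancel hi0] at this
    exact this.symm
  have hne : p.getVert (i - 1) ≠ p.getVert (i + 1) := fun h => by
    have := hp.getVert_injOn (show i - 1 ≤ p.length by omega) (show i + 1 ≤ p.length by omega) h
    omega
  have hnbr : {p.getVert (i - 1), p.getVert (i + 1)} = G.neighborSet (p.getVert i) :=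
    Set.eq_of_subset_of_ncard_le (Set.pair_subset hprev (p.adj_getVert_succ hi))
      (by rwa [Set.ncard_pair hne])
  have hw : w ∈ G.neighborSet (p.getVert i) := hadj
  rw [← hnbr] at hw
  rcases hw with rfl | rfl <;> exact p.getVert_mem_support _

theorem mem_support_of_connected_of_length_le [Finite V] (hG : G.Connected)
    (hdeg : ∀ v, (G.neighborSet v).ncard ≤ 2) {u v : V} {p : G.Walk u v} (hp : p.IsPath)
    (hmax : ∀ u' v' (q : G.Walk u' v'), q.IsPath → q.length ≤ p.length) (w : V) :
    w ∈ p.support := by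
  by_contra hw
  obtain ⟨d, -, hfst, hsnd⟩ :=
    (hG.preconnected u w).some.exists_boundary_dart {x | x ∈ p.support} p.start_mem_support hw
  refine hsnd ?_
  obtain ⟨i, hi, hip⟩ := SimpleGraph.Walk.mem_support_iff_exists_getVert.1 hfst
  have hadj : G.Adj (p.getVert i) d.snd := hi ▸ d.adj
  rcases Nat.eq_zero_or_pos i with rfl | hi0
  · rw [p.getVert_zero] at hadj
    exact mem_support_of_adj_start_of_length_le hp hmax hadj
  rcases hip.eq_or_lt with rfl | hip
  · rw [p.getVert_length] at hadj
    have hmem := mem_support_of_adj_start_of_length_le hp.reverse (by simpa using hmax) hadj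
    simpa using hmem
  · exact mem_support_of_adj_getVert hp hi0 hip (hdeg _) hadj

theorem isPathGraph_of_isTree [Finite V] (hG : G.IsTree)
    (hdeg : ∀ v, (G.neighborSet v).ncard ≤ 2) : IsPathGraph G := by
  have := hG.connected.nonempty
  obtain ⟨u, v, p, hp, hmax⟩ :=
    SimpleGraph.Walk.exists_isPath_forall_isPath_length_le_length G
  let vertex (i : Fin (p.length + 1)) : V := p.getVert i
  have hvertex : Function.Bijective vertex := by
    refine ⟨fun i j h => Fin.ext (hp.getVert_injOn i.is_le j.is_le h), fun w => ?_⟩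
    obtain ⟨i, rfl, hi⟩ := SimpleGraph.Walk.mem_support_iff_exists_getVert.1
      (mem_support_of_connected_of_length_le hG.connected hdeg hp hmax w)
    exact ⟨⟨i, Nat.lt_succ_of_le hi⟩, rfl⟩
  refine ⟨p.length + 1, (Equiv.ofBijective vertex hvertex).symm, fun a b => ?_⟩
  obtain ⟨i, rfl⟩ := hvertex.2 a
  obtain ⟨j, rfl⟩ := hvertex.2 b
  simp only [Equiv.ofBijective_symm_apply_apply]
  exact adj_getVert_iff_of_isAcyclic hG.isAcyclic hp i.is_le j.is_le

theorem isPathGraph_induce_compSupp [Finite V] (hG : G.IsAcyclic)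
    (hdeg : ∀ v, (G.neighborSet v).ncard ≤ 2) (c : G.ConnectedComponent) :
    IsPathGraph (G.induce (compSupp G c)) :=
  isPathGraph_of_isTree (hG.isTree_connectedComponent c) fun v =>
    (Set.ncard_le_ncard_of_injOn Subtype.val (fun _ => id) Subtype.val_injective.injOn).trans
      (hdeg v)

end PathGraph

theorem binomialEdgeIdeal_completeIntersection_iff_general (K : Type*) [Field K] {V : Type*}
    [Finite V] (G : SimpleGraph V) :
    ((mu (binomialEdgeIdeal K G) : ℕ∞) = htI (binomialEdgeIdeal K G)) ↔
      ∀ c : G.ConnectedComponent, IsPathGraph (G.induce (compSupp G c)) := by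
  rw [mu_eq_spanFinrank, htI_eq_height, spanFinrank_binomialEdgeIdeal]
  constructor
  · intro h
    exact isPathGraph_induce_compSupp (isAcyclic_of_ncard_edgeSet_le_height h.le)
      (ncard_neighborSet_le_two_of_ncard_edgeSet_le_height h.le)
  · intro h
    obtain ⟨r, hr, hadj⟩ := exists_consecutive_ranks_of_isPathGraph h
    exact (ncard_edgeSet_le_height_binomialEdgeIdeal hr hadj).antisymm
      (height_binomialEdgeIdeal_le_ncard G)

/-- The binomial edge ideal `J_G` is a complete intersection ideal
(its minimal number of generators equals its height) if and only if every connected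
component of `G` is a path graph. -/
theorem binomialEdgeIdeal_completeIntersection_iff
    (K : Type*) [Field K] (n : ℕ) (G : SimpleGraph (Fin n)) :
    ((mu (binomialEdgeIdeal K G) : ℕ∞) = htI (binomialEdgeIdeal K G)) ↔
      ∀ c : G.ConnectedComponent, IsPathGraph (G.induce (compSupp G c)) :=
  binomialEdgeIdeal_completeIntersection_iff_general K G

end
end

section
/- Let G be the graph with vertex set {1,2,3,4,5,6} and edge set {{1,2},{2,3},{2,4},{2,5},{3,4},{4,5},{5,6}}. Then S/J_G is Cohen–Macaulay. -/
open MvPolynomial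

noncomputable section

/-- The graph of Lemma 2.5: vertex set `{1,…,6}` (modelled as `Fin 6`, with vertex
`i` corresponding to `i - 1`) and edge set
`{{1,2},{2,3},{2,4},{2,5},{3,4},{4,5},{5,6}}`. -/
def fanGraph : SimpleGraph (Fin 6) :=
  SimpleGraph.fromRel (fun a b =>
    (a, b) ∈ ([(0, 1), (1, 2), (1, 3), (1, 4), (2, 3), (3, 4), (4, 5)] :
      List (Fin 6 × Fin 6)))

/-!
For a graph on `0, …, n - 1`, the `n + 1` linear forms `x 0`, `x k - y (k - 1)`, `-y (n - 1)` make
`S/J_G` an algebra over a polynomial ring `A`, generated by the `x i`. If it is finite and free over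
`A`, then the forms are a regular sequence of length `dim S/J_G`, and `S/J_G` is Cohen–Macaulay.

For the fan graph, rewriting by the leading monomials of the relations shows that 18 squarefree
monomials span `S/J_G` over `A`. On the other hand each minimal prime of `J_G` contributes points of
the generic fibre over `A`: deleting the corresponding cut leaves isolated vertices and one interval
on which `y / x` is constant, and this constant is a root of a polynomial with generic coefficients
whose degree is the length of the interval. The five cuts give `6 + 4 + 4 + 2 + 2 = 18` points; by
independence of characters, the 18 monomials are a basis.
-/

section Depth

open RingTheory.Sequence in
lemma length_le_supportDim_of_isRegular {R M : Type*} [CommRing R] [AddCommGroup M] [Module R M]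
    [Module.Finite R M] {l : List R} (h : IsRegular M l) :
    (l.length : WithBot ℕ∞) ≤ Module.supportDim R M := by
  induction l generalizing M with
  | nil =>
    have := h.nontrivial
    have hbot := Module.supportDim_ne_bot_of_nontrivial R M
    obtain ⟨d, hd⟩ := WithBot.ne_bot_iff_exists.mp hbot
    rw [← hd]
    exact WithBot.coe_le_coe.mpr zero_le
  | cons r l ih =>
    rw [isRegular_cons_iff] at h
    calc ((r :: l).length : WithBot ℕ∞) = (l.length : WithBot ℕ∞) + 1 := by simp
      _ ≤ Module.supportDim R (QuotSMulTop r M) + 1 := by gcongr; exact ih h.2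
      _ ≤ Module.supportDim R M :=
        Module.supportDim_quotSMulTop_succ_le_of_notMem_minimalPrimes
          fun _ ↦ h.1.notMem_of_mem_minimalPrimes

lemma ringDepth_le_ringKrullDim {R : Type*} [CommRing R] [Nontrivial R] (m : Ideal R) :
    (ringDepth R m : WithBot ℕ∞) ≤ ringKrullDim R := by
  obtain ⟨d, hd⟩ := WithBot.ne_bot_iff_exists.mp
    (ne_bot_of_le_ne_bot WithBot.zero_ne_bot (ringKrullDim_nonneg_of_nontrivial (R := R)))
  rw [← hd]
  refine WithBot.coe_le_coe.mpr (sSup_le ?_)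
  rintro _ ⟨l, rfl, -, hl⟩
  have := length_le_supportDim_of_isRegular hl
  rw [Module.supportDim_self_eq_ringKrullDim, ← hd] at this
  exact WithBot.coe_le_coe.mp this

lemma ringKrullDim_le_of_isIntegral (A R : Type*) [CommRing A] [CommRing R] [Algebra A R]
    [Algebra.IsIntegral A R] : ringKrullDim R ≤ ringKrullDim A := by
  refine Order.krullDim_le_of_strictMono (PrimeSpectrum.comap (algebraMap A R)) fun P Q h ↦ ?_
  exact Ideal.IsIntegral.comap_lt_comap h

section Variables

variable {R : Type*} [CommSemiring R]

lemma ofList_take_ofFn {n : ℕ} (f : Fin n → R) (i : ℕ) :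
    Ideal.ofList ((List.ofFn f).take i) = Ideal.span (f '' {j | (j : ℕ) < i}) := by
  refine congrArg Ideal.span (Set.ext fun r ↦ ?_)
  simp only [Set.mem_ofPred_eq, List.mem_take_iff_getElem, List.length_ofFn, List.getElem_ofFn,
    lt_min_iff, Set.mem_image]
  exact ⟨fun ⟨j, hj, hr⟩ ↦ ⟨⟨j, hj.2⟩, hj.1, hr⟩, fun ⟨j, hj, hr⟩ ↦ ⟨j, ⟨hj, j.2⟩, hr⟩⟩

lemma mem_span_X_image_of_X_mul_mem {σ : Type*} {s : Set σ} {i : σ} (hi : i ∉ s)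
    {p : MvPolynomial σ R} (hp : X i * p ∈ Ideal.span (X '' s)) : p ∈ Ideal.span (X '' s) := by
  rw [mem_ideal_span_X_image] at hp ⊢
  intro m hm
  have hm' : Finsupp.single i 1 + m ∈ (X i * p).support := by
    rwa [mem_support_iff, coeff_X_mul, ← mem_support_iff]
  obtain ⟨j, hj, hjm⟩ := hp _ hm'
  have hij : i ≠ j := fun h ↦ hi (h ▸ hj)
  exact ⟨j, hj, by simpa [Finsupp.single_apply, hij] using hjm⟩

lemma span_range_X_ne_top [Nontrivial R] (σ : Type*) :
    Ideal.span (Set.range (X : σ → MvPolynomial σ R)) ≠ ⊤ := by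
  rw [Ideal.ne_top_iff_one, ← Set.image_univ, mem_ideal_span_X_image]
  simp

end Variables

lemma isRegular_ofFn_X {R : Type*} [CommRing R] [Nontrivial R] (n : ℕ) :
    RingTheory.Sequence.IsRegular (MvPolynomial (Fin n) R)
      (List.ofFn (X : Fin n → MvPolynomial (Fin n) R)) := by
  refine ⟨⟨fun i hi ↦ ?_⟩, ?_⟩
  · rw [smul_eq_mul, Ideal.mul_top, ofList_take_ofFn,
      isSMulRegular_quotient_iff_mem_of_smul_mem]
    intro p hp
    rw [List.getElem_ofFn, smul_eq_mul] at hp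
    exact mem_span_X_image_of_X_mul_mem (by simp) hp
  · have hspan : Ideal.ofList (List.ofFn (X : Fin n → MvPolynomial (Fin n) R)) =
        Ideal.span (Set.range X) := by
      simp only [Ideal.ofList, List.mem_ofFn, Set.range]
    rw [smul_eq_mul, Ideal.mul_top, hspan]
    exact (span_range_X_ne_top _).symm

lemma ringDepth_eq_ringKrullDim_of_finite_free {K R : Type*} [Field K] {n : ℕ} [CommRing R]
    [Nontrivial R] [Algebra (MvPolynomial (Fin n) K) R] [Module.Finite (MvPolynomial (Fin n) K) R]
    [Module.Free (MvPolynomial (Fin n) K) R] (m : Ideal R)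
    (hm : ∀ i, algebraMap (MvPolynomial (Fin n) K) R (X i) ∈ m) :
    (ringDepth R m : WithBot ℕ∞) = ringKrullDim R := by
  refine le_antisymm (ringDepth_le_ringKrullDim m) ?_
  calc ringKrullDim R ≤ ringKrullDim (MvPolynomial (Fin n) K) := ringKrullDim_le_of_isIntegral _ _
    _ = ((n : ℕ∞) : WithBot ℕ∞) := by
      rw [MvPolynomial.ringKrullDim_of_isNoetherianRing, ringKrullDim_eq_zero_of_field]
      simp
    _ ≤ ringDepth R m := by
      refine WithBot.coe_le_coe.mpr (le_sSup ?_)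
      refine ⟨(List.ofFn X).map (algebraMap (MvPolynomial (Fin n) K) R), by simp, ?_,
        (isRegular_ofFn_X n).of_faithfullyFlat⟩
      intro x hx
      obtain ⟨f, hf, rfl⟩ := List.mem_map.mp hx
      obtain ⟨j, rfl⟩ := (List.mem_ofFn' _ _).mp hf
      exact hm j

end Depth

/-- The matrix `φ k (b i)` has independent rows by independence of characters, so it has at least
as large a rank as it has columns. -/
lemma linearIndependent_of_span_eq_top_of_card_le {ι κ A R L : Type*} [Finite ι] [Finite κ]
    [CommRing A] [CommRing R] [Algebra A R] [Field L] [Algebra A L] [FaithfulSMul A L]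
    {b : ι → R} (hb : ⊤ ≤ Submodule.span A (Set.range b)) {φ : κ → R →ₐ[A] L}
    (hφ : Function.Injective φ) (hcard : Nat.card ι ≤ Nat.card κ) : LinearIndependent A b := by
  have := Fintype.ofFinite ι
  have := Fintype.ofFinite κ
  let M : Matrix κ ι L := Matrix.of fun k i ↦ φ k (b i)
  have hrow : LinearIndependent L M.row := by
    rw [Fintype.linearIndependent_iff]
    intro g hg
    have hsum : ∑ k, g k • (φ k).toLinearMap = 0 := by
      refine LinearMap.ext_on_range (top_le_iff.mp hb) fun i ↦ ?_
      simpa [M] using congrFun hg i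
    exact Fintype.linearIndependent_iff.mp
      ((linearIndependent_algHom_toLinearMap A R L).comp φ hφ) g hsum
  have hcol : LinearIndependent L M.col := by
    rw [linearIndependent_iff_card_le_finrank_span, Set.finrank,
      ← Matrix.rank_eq_finrank_span_cols, hrow.rank_matrix, ← Nat.card_eq_fintype_card,
      ← Nat.card_eq_fintype_card]
    exact hcard
  rw [Fintype.linearIndependent_iff] at hcol ⊢
  intro v hv i
  refine FaithfulSMul.algebraMap_injective A L ?_
  rw [map_zero]
  refine hcol (fun i ↦ algebraMap A L (v i)) (funext fun k ↦ ?_) i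
  simpa [M, Algebra.smul_def] using congrArg (φ k) hv

section StandardMonomials

variable {A R σ : Type*} [CommSemiring A] [CommSemiring R] [Algebra A R]

variable (A) in
/-- The span of the monomials of weight less than `d` in the family `x`, for the weights `w`.
Monomials are encoded as multisets of indices. -/
def lowerSpan (x : σ → R) (w : σ → ℕ) (d : ℕ) : Submodule A R :=
  Submodule.span A ((fun m : Multiset σ ↦ (m.map x).prod) '' {m | (m.map w).sum < d})

variable {x : σ → R} {w : σ → ℕ}

lemma prod_mem_lowerSpan {d : ℕ} (m : Multiset σ) (hm : (m.map w).sum < d) :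
    (m.map x).prod ∈ lowerSpan A x w d :=
  Submodule.subset_span ⟨m, hm, rfl⟩

lemma mul_prod_mem_lowerSpan {d : ℕ} {r : R} (hr : r ∈ lowerSpan A x w d) (m : Multiset σ) :
    r * (m.map x).prod ∈ lowerSpan A x w (d + (m.map w).sum) := by
  induction hr using Submodule.span_induction with
  | mem _ h =>
    obtain ⟨u, hu, rfl⟩ := h
    have hlt : ((u + m).map w).sum < d + (m.map w).sum := by
      simpa using hu
    simpa using prod_mem_lowerSpan (A := A) (x := x) (u + m) hlt
  | zero => simp
  | add _ _ _ _ h₁ h₂ => rw [add_mul]; exact add_mem h₁ h₂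
  | smul a _ _ h => rw [smul_mul_assoc]; exact Submodule.smul_mem _ a h

lemma span_range_prod_eq_top (hx : Algebra.adjoin A (Set.range x) = ⊤) :
    Submodule.span A (Set.range fun m : Multiset σ ↦ (m.map x).prod) = ⊤ := by
  rw [← top_le_iff, ← Algebra.top_toSubmodule, ← hx, Algebra.adjoin_eq_span]
  refine Submodule.span_mono fun r hr ↦ ?_
  obtain ⟨l, hl, rfl⟩ := Submonoid.exists_multiset_of_mem_closure hr
  obtain ⟨m, rfl⟩ : ∃ m : Multiset σ, m.map x = l := by
    lift l to Multiset (Set.range x) using hl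
    exact ⟨l.map (Set.rangeSplitting x), by
      simp [Multiset.map_map, Set.apply_rangeSplitting]⟩
  exact ⟨m, rfl⟩

theorem span_standardMonomials_eq_top (hx : Algebra.adjoin A (Set.range x) = ⊤)
    {lead : Set (Multiset σ)}
    (hlead : ∀ u ∈ lead, (u.map x).prod ∈ lowerSpan A x w (u.map w).sum) :
    Submodule.span A ((fun m : Multiset σ ↦ (m.map x).prod) '' {m | ∀ u ∈ lead, ¬ u ≤ m}) = ⊤ := by
  set N := Submodule.span A ((fun m : Multiset σ ↦ (m.map x).prod) '' {m | ∀ u ∈ lead, ¬ u ≤ m})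
  suffices hmem : ∀ d (m : Multiset σ), (m.map w).sum = d → (m.map x).prod ∈ N by
    rw [← top_le_iff, ← span_range_prod_eq_top hx, Submodule.span_le]
    rintro _ ⟨m, rfl⟩
    exact hmem _ m rfl
  intro d
  induction d using Nat.strong_induction_on with | _ d ih
  rintro m rfl
  by_cases hm : ∀ u ∈ lead, ¬ u ≤ m
  · exact Submodule.subset_span ⟨m, hm, rfl⟩
  push Not at hm
  obtain ⟨u, hu, hum⟩ := hm
  obtain ⟨v, rfl⟩ := Multiset.le_iff_exists_add.mp hum
  have hlower : lowerSpan A x w ((u + v).map w).sum ≤ N := by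
    refine Submodule.span_le.mpr ?_
    rintro _ ⟨m', hm', rfl⟩
    exact ih _ hm' m' rfl
  simpa using hlower (by simpa using mul_prod_mem_lowerSpan (hlead u hu) v)

lemma span_squarefree_standardMonomials_eq_top
    (hx : Algebra.adjoin A (Set.range x) = ⊤)
    {lead : Finset (Multiset σ)}
    (hlead : ∀ u ∈ lead, (u.map x).prod ∈ lowerSpan A x w (u.map w).sum)
    (hsq : ∀ i, ∃ u ∈ lead, u ≤ {i, i}) :
    Submodule.span A (Set.range fun s : {s : Finset σ // ∀ u ∈ lead, ¬ u ≤ s.val} ↦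
      ∏ i ∈ s.1, x i) = ⊤ := by
  rw [← top_le_iff, ← span_standardMonomials_eq_top hx (lead := lead) hlead]
  refine Submodule.span_mono ?_
  rintro _ ⟨m, hm, rfl⟩
  have hnodup : m.Nodup := Multiset.nodup_iff_le.mpr fun i hi ↦ by
    obtain ⟨u, hu, hui⟩ := hsq i
    exact hm u hu (hui.trans hi)
  exact ⟨⟨⟨m, hnodup⟩, hm⟩, rfl⟩

end StandardMonomials

section Horner

/-- The value `c 0 * r ^ d + c 1 * r ^ (d - 1) + … + c d`, computed by Horner's scheme. -/
def horner {R : Type*} [Semiring R] (c : ℕ → R) (r : R) : ℕ → R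
  | 0 => c 0
  | d + 1 => r * horner c r d + c (d + 1)

lemma map_horner {R S : Type*} [Semiring R] [Semiring S] (f : R →+* S) (c : ℕ → R) (r : R)
    (d : ℕ) : f (horner c r d) = horner (f ∘ c) (f r) d := by
  induction d with
  | zero => rfl
  | succ d ih => simp [horner, ih]

lemma horner_mem {R σ : Type*} [Semiring R] [SetLike σ R] [SubsemiringClass σ R] {s : σ}
    {c : ℕ → R} {r : R} {d : ℕ} (hc : ∀ j ≤ d, c j ∈ s) (hr : r ∈ s) : horner c r d ∈ s := by
  induction d with
  | zero => exact hc 0 le_rfl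
  | succ d ih =>
    exact add_mem (mul_mem hr (ih fun j hj ↦ hc j (hj.trans d.le_succ))) (hc _ le_rfl)

/-- The polynomial whose Horner evaluation is `horner c r d`. -/
def hornerPoly {R : Type*} [CommSemiring R] (c : ℕ → R) (d : ℕ) : Polynomial R :=
  horner (Polynomial.C ∘ c) Polynomial.X d

lemma eval_hornerPoly {R : Type*} [CommSemiring R] (c : ℕ → R) (r : R) (d : ℕ) :
    (hornerPoly c d).eval r = horner c r d := by
  rw [hornerPoly, ← Polynomial.coe_evalRingHom, map_horner]
  simp [Function.comp_def]

lemma coeff_zero_hornerPoly {R : Type*} [CommSemiring R] (c : ℕ → R) (d : ℕ) :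
    (hornerPoly c d).coeff 0 = c d := by
  cases d <;> simp [hornerPoly, horner]

lemma degree_hornerPoly {R : Type*} [CommSemiring R] [NoZeroDivisors R] {c : ℕ → R} (hc : c 0 ≠ 0)
    (d : ℕ) : (hornerPoly c d).degree = d := by
  induction d with
  | zero => exact Polynomial.degree_C hc
  | succ d ih =>
    have : Nontrivial R := ⟨c 0, 0, hc⟩
    have hdeg : (Polynomial.X * hornerPoly c d).degree = ((d + 1 : ℕ) : WithBot ℕ) := by
      rw [Polynomial.degree_mul, Polynomial.degree_X, ih, add_comm, Nat.cast_succ]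
    change (Polynomial.X * hornerPoly c d + Polynomial.C (c (d + 1))).degree = _
    rw [Polynomial.degree_add_C (by rw [hdeg]; exact_mod_cast d.succ_pos), hdeg]

section Transcendental

variable {K L : Type*} [Field K] [Field L] [Algebra K L] {F : Subalgebra K L} {c : ℕ → L} {μ : L}
  {d : ℕ}

lemma transcendental_of_horner_eq_zero (hF : ∀ j ≤ d, c j ∈ F) (hd : Transcendental F (c (d + 1)))
    (hμ : horner c μ (d + 1) = 0) : Transcendental F μ := by
  intro halg
  have hmem : horner c μ d ∈ Subalgebra.algebraicClosure F L :=
    horner_mem (fun j hj ↦ isAlgebraic_algebraMap (⟨c j, hF j hj⟩ : F)) halg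
  rw [eq_neg_of_add_eq_zero_right hμ] at hd
  exact hd (halg.mul hmem).neg

lemma eval_ne_zero_of_mem_lifts (hμ : Transcendental F μ) {p : Polynomial L}
    (hp : p ∈ Polynomial.lifts (algebraMap F L)) (hp0 : p ≠ 0) : p.eval μ ≠ 0 := by
  obtain ⟨q, rfl⟩ := (Polynomial.mem_lifts p).mp hp
  rw [Polynomial.eval_map_algebraMap]
  exact fun h ↦ hp0 (by rw [transcendental_iff.mp hμ q h, Polynomial.map_zero])

lemma hornerPoly_mem_lifts (hF : ∀ j ≤ d, c j ∈ F) :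
    hornerPoly c d ∈ Polynomial.lifts (algebraMap F L) :=
  horner_mem (fun j hj ↦ Polynomial.C_mem_lifts _ (⟨c j, hF j hj⟩ : F)) (Polynomial.X_mem_lifts _)

lemma horner_ne_zero (hμ : Transcendental F μ) (hF : ∀ j ≤ d, c j ∈ F) (h₀ : c 0 ≠ 0) :
    horner c μ d ≠ 0 := by
  rw [← eval_hornerPoly]
  refine eval_ne_zero_of_mem_lifts hμ (hornerPoly_mem_lifts hF) fun h ↦ ?_
  simpa [h] using degree_hornerPoly h₀ d

variable [IsAlgClosed L]

lemma separable_hornerPoly (hF : ∀ j ≤ d, c j ∈ F) (hd : Transcendental F (c (d + 1)))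
    (hne : c d ≠ 0) : (hornerPoly c (d + 1)).Separable := by
  refine (Polynomial.isCoprime_iff_aeval_ne_zero_of_isAlgClosed L L _ _).mpr fun μ ↦ ?_
  simp only [Polynomial.coe_aeval_eq_eval, eval_hornerPoly, or_iff_not_imp_left, not_not]
  intro hμ
  have hderiv : Polynomial.derivative (hornerPoly c (d + 1)) =
      hornerPoly c d + Polynomial.X * Polynomial.derivative (hornerPoly c d) := by
    simp [hornerPoly, horner, Polynomial.derivative_mul]
  rw [hderiv]
  refine eval_ne_zero_of_mem_lifts (transcendental_of_horner_eq_zero hF hd hμ) ?_ fun h ↦ hne ?_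
  · obtain ⟨q, hq⟩ := (Polynomial.mem_lifts _).mp (hornerPoly_mem_lifts hF)
    exact (Polynomial.mem_lifts _).mpr ⟨q + Polynomial.X * Polynomial.derivative q, by
      simp [← hq, Polynomial.derivative_map]⟩
  · simpa [coeff_zero_hornerPoly] using congrArg (Polynomial.coeff · 0) h

lemma card_horner_eq_zero (hF : ∀ j ≤ d, c j ∈ F) (hd : Transcendental F (c (d + 1)))
    (h₀ : c 0 ≠ 0) (hne : c d ≠ 0) : Nat.card {μ // horner c μ (d + 1) = 0} = d + 1 := by
  have hdeg := degree_hornerPoly h₀ (d + 1)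
  have hroots : {μ | horner c μ (d + 1) = 0} = (hornerPoly c (d + 1)).rootSet L := by
    ext μ
    have hp : hornerPoly c (d + 1) ≠ 0 := Polynomial.ne_zero_of_coe_le_degree hdeg.ge
    simp [Polynomial.mem_rootSet, hp, eval_hornerPoly]
  change Nat.card {μ | horner c μ (d + 1) = 0} = d + 1
  rw [hroots, Nat.card_eq_fintype_card,
    Polynomial.card_rootSet_eq_natDegree (separable_hornerPoly hF hd hne) (IsAlgClosed.splits _),
    Polynomial.natDegree_eq_of_degree_eq_some hdeg]

end Transcendental

end Horner

section ShiftDiff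

variable {R : Type*} [AddCommGroup R] {n : ℕ}

/-- The sequence `x 0, x 1 - y 0, …, x (n - 1) - y (n - 2), -y (n - 1)` of consecutive differences,
with the conventions `y (-1) = 0` and `x n = 0`. For the classes of the variables it is a linear
system of parameters of `S/J_G`. -/
def shiftDiff (x y : Fin n → R) (k : Fin (n + 1)) : R :=
  Fin.snoc (α := fun _ ↦ R) x 0 k - Fin.cons (α := fun _ ↦ R) 0 y k

lemma shiftDiff_zero [NeZero n] (x y : Fin n → R) : shiftDiff x y 0 = x 0 := by
  simp only [shiftDiff, Fin.cons_zero, sub_zero]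
  exact Fin.snoc_castSucc (α := fun _ ↦ R) 0 x 0

lemma shiftDiff_succ (x y : Fin n → R) (j : Fin n) :
    shiftDiff x y j.succ = Fin.snoc (α := fun _ ↦ R) x 0 j.succ - y j := by
  simp only [shiftDiff, Fin.cons_succ]

lemma shiftDiff_succ_of_val_add_one (x y : Fin n → R) {i k : Fin n} (hik : (i : ℕ) + 1 = k) :
    shiftDiff x y i.succ = x k - y i := by
  have hsucc : i.succ = k.castSucc := Fin.ext hik
  rw [shiftDiff_succ, hsucc, Fin.snoc_castSucc]

lemma map_shiftDiff {S F : Type*} [AddCommGroup S] [FunLike F R S] [AddMonoidHomClass F R S]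
    (f : F) (x y : Fin n → R) (k : Fin (n + 1)) :
    f (shiftDiff x y k) = shiftDiff (fun i ↦ f (x i)) (fun i ↦ f (y i)) k := by
  have hsnoc : f (Fin.snoc (α := fun _ ↦ R) x 0 k) =
      Fin.snoc (α := fun _ ↦ S) (fun i ↦ f (x i)) 0 k := by
    refine Fin.lastCases ?_ (fun i ↦ ?_) k
    · simp only [Fin.snoc_last, map_zero]
    · simp only [Fin.snoc_castSucc]
  have hcons : f (Fin.cons (α := fun _ ↦ R) 0 y k) =
      Fin.cons (α := fun _ ↦ S) 0 (fun i ↦ f (y i)) k := by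
    refine Fin.cases ?_ (fun i ↦ ?_) k
    · simp only [Fin.cons_zero, map_zero]
    · simp only [Fin.cons_succ]
  rw [shiftDiff, map_sub, hsnoc, hcons, shiftDiff]

end ShiftDiff

/-- The coordinate ring `S/J_G` of the binomial edge ideal of a graph on `Fin n`. -/
abbrev EdgeRing (K : Type*) [Field K] {n : ℕ} (G : SimpleGraph (Fin n)) : Type _ :=
  MvPolynomial (Fin n ⊕ Fin n) K ⧸ binomialEdgeIdeal K G

namespace EdgeRing

section Parameters

variable (K : Type*) [Field K] {n : ℕ} (G : SimpleGraph (Fin n))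

/-- The class of the variable `x_i` in `S/J_G`. -/
def x (i : Fin n) : EdgeRing K G := Ideal.Quotient.mk _ (X (Sum.inl i))

/-- The class of the variable `y_i` in `S/J_G`. -/
def y (i : Fin n) : EdgeRing K G := Ideal.Quotient.mk _ (X (Sum.inr i))

/-- `S/J_G` as an algebra over the polynomial ring in the parameters `shiftDiff x y`. -/
instance : Algebra (MvPolynomial (Fin (n + 1)) K) (EdgeRing K G) :=
  (aeval (R := K) (shiftDiff (x K G) (y K G))).toRingHom.toAlgebra

instance : Module (MvPolynomial (Fin (n + 1)) K) (EdgeRing K G) := Algebra.toModule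

lemma algebraMap_X (k : Fin (n + 1)) :
    algebraMap (MvPolynomial (Fin (n + 1)) K) (EdgeRing K G) (X k) =
      shiftDiff (x K G) (y K G) k :=
  aeval_X _ k

instance : IsScalarTower K (MvPolynomial (Fin (n + 1)) K) (EdgeRing K G) :=
  .of_algebraMap_eq fun a ↦ (aeval_C (shiftDiff (x K G) (y K G)) a).symm

lemma algebraMap_X_mem_gradedMaxQuot (k : Fin (n + 1)) :
    algebraMap (MvPolynomial (Fin (n + 1)) K) (EdgeRing K G) (X k) ∈
      gradedMaxQuot (binomialEdgeIdeal K G) := by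
  have hvar (a : Fin n ⊕ Fin n) : Ideal.Quotient.mk (binomialEdgeIdeal K G) (X a) ∈
      gradedMaxQuot (binomialEdgeIdeal K G) :=
    Ideal.mem_map_of_mem _ (Ideal.subset_span ⟨a, rfl⟩)
  rw [algebraMap_X, shiftDiff]
  refine sub_mem ?_ ?_
  · refine Fin.lastCases ?_ (fun i ↦ ?_) k
    · simp only [Fin.snoc_last, zero_mem]
    · rw [Fin.snoc_castSucc]; exact hvar (Sum.inl i)
  · refine Fin.cases ?_ (fun i ↦ ?_) k
    · simp only [Fin.cons_zero, zero_mem]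
    · rw [Fin.cons_succ]; exact hvar (Sum.inr i)

variable {K G} in
lemma x_mul_y_eq {i j : Fin n} (h : G.Adj i j) :
    x K G i * y K G j = x K G j * y K G i := by
  rw [x, x, y, y, ← map_mul, ← map_mul, Ideal.Quotient.eq]
  exact Ideal.subset_span ⟨i, j, h, rfl⟩

lemma adjoin_range_x :
    Algebra.adjoin (MvPolynomial (Fin (n + 1)) K) (Set.range (x K G)) = ⊤ := by
  set B := Algebra.adjoin (MvPolynomial (Fin (n + 1)) K) (Set.range (x K G))
  have hx (i : Fin n) : x K G i ∈ B := Algebra.subset_adjoin ⟨i, rfl⟩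
  have hy (i : Fin n) : y K G i ∈ B := by
    have hsnoc (k : Fin (n + 1)) : Fin.snoc (α := fun _ ↦ EdgeRing K G) (x K G) 0 k ∈ B := by
      refine Fin.lastCases ?_ (fun i ↦ ?_) k
      · simp only [Fin.snoc_last, zero_mem]
      · simpa only [Fin.snoc_castSucc] using hx i
    have hyi := sub_mem (hsnoc i.succ) (B.algebraMap_mem (X i.succ))
    rwa [algebraMap_X, shiftDiff_succ, sub_sub_cancel] at hyi
  refine Algebra.eq_top_iff.mpr fun r ↦ ?_
  obtain ⟨p, rfl⟩ := Ideal.Quotient.mk_surjective r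
  induction p using MvPolynomial.induction_on with
  | C a => exact (B.restrictScalars K).algebraMap_mem a
  | add p q hp hq => rw [map_add]; exact add_mem hp hq
  | mul_X p a hp =>
    rw [map_mul]
    exact mul_mem hp (a.casesOn hx hy)

end Parameters

section Weight

variable {n : ℕ}

/-- The weight of `x i`. It is strictly concave and decreasing in `i`, which puts the leading
monomial `x (i + 1) * x j` of an edge `{i, j}` above the other terms of its relation. -/
def weight (i : Fin n) : ℕ := n ^ 2 - i ^ 2

lemma weight_add_sq (i : Fin n) : weight i + i ^ 2 = n ^ 2 :=
  Nat.sub_add_cancel (Nat.pow_le_pow_left i.2.le 2)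

lemma weight_pos (i : Fin n) : 0 < weight i :=
  Nat.sub_pos_of_lt (Nat.pow_lt_pow_left i.2 two_ne_zero)

variable {i j k : Fin n}

lemma weight_lt_weight_add_weight (hik : (i : ℕ) + 1 = k) (hkj : k ≤ j) :
    weight i < weight k + weight j := by
  have hj : (i : ℕ) + 1 ≤ j := hik ▸ hkj
  have hi := weight_add_sq i
  have hk := weight_add_sq k
  rw [← hik] at hk
  nlinarith [weight_add_sq j, j.2]

lemma weight_add_weight_lt_weight_add_weight {l : Fin n} (hik : (i : ℕ) + 1 = k) (hkj : k ≤ j)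
    (hjl : (j : ℕ) + 1 = l) : weight l + weight i < weight k + weight j := by
  have hj : (i : ℕ) + 1 ≤ j := hik ▸ hkj
  have hk := weight_add_sq k
  have hl := weight_add_sq l
  rw [← hik] at hk
  rw [← hjl] at hl
  nlinarith [weight_add_sq i, weight_add_sq j]

end Weight

section LeadingMonomials

variable {K : Type*} [Field K] {n : ℕ} {G : SimpleGraph (Fin n)}

lemma x_zero_mem_lowerSpan [NeZero n] :
    x K G 0 ∈ lowerSpan (MvPolynomial (Fin (n + 1)) K) (x K G) weight (weight (0 : Fin n)) := by
  have hone := prod_mem_lowerSpan (A := MvPolynomial (Fin (n + 1)) K) (x := x K G) (w := weight)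
    0 (weight_pos (0 : Fin n))
  have hX := Submodule.smul_mem _ (X 0 : MvPolynomial (Fin (n + 1)) K) hone
  rwa [Algebra.smul_def, algebraMap_X, shiftDiff_zero, Multiset.map_zero, Multiset.prod_zero,
    mul_one] at hX

variable {i j k : Fin n} {m : Multiset (Fin n)}

lemma prod_x_eq_of_mul_x_mul_y_eq (hik : (i : ℕ) + 1 = k)
    (h : (m.map (x K G)).prod * (x K G i * y K G j) = (m.map (x K G)).prod * (x K G j * y K G i)) :
    ((k ::ₘ j ::ₘ m).map (x K G)).prod =
      Fin.snoc (α := fun _ ↦ EdgeRing K G) (x K G) 0 j.succ * ((i ::ₘ m).map (x K G)).prod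
        - (X j.succ : MvPolynomial (Fin (n + 1)) K) • ((i ::ₘ m).map (x K G)).prod
        + (X i.succ : MvPolynomial (Fin (n + 1)) K) • ((j ::ₘ m).map (x K G)).prod := by
  simp only [Algebra.smul_def, algebraMap_X, shiftDiff_succ_of_val_add_one _ _ hik,
    shiftDiff_succ, Multiset.map_cons, Multiset.prod_cons]
  linear_combination -h

/-- If `x i * y j - x j * y i` vanishes after multiplication by a monomial in the `x`'s, then
rewriting `y i` and `y j` through the parameters makes `x (i + 1) * x j` its leading monomial. -/
lemma prod_x_mem_lowerSpan_of_mul_x_mul_y_eq (hik : (i : ℕ) + 1 = k) (hkj : k ≤ j)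
    (h : (m.map (x K G)).prod * (x K G i * y K G j) = (m.map (x K G)).prod * (x K G j * y K G i)) :
    ((k ::ₘ j ::ₘ m).map (x K G)).prod ∈
      lowerSpan (MvPolynomial (Fin (n + 1)) K) (x K G) weight
        ((k ::ₘ j ::ₘ m).map weight).sum := by
  have hwt : ((k ::ₘ j ::ₘ m).map weight).sum = weight k + weight j + (m.map weight).sum := by
    simp only [Multiset.map_cons, Multiset.sum_cons, add_assoc]
  rw [prod_x_eq_of_mul_x_mul_y_eq hik h, hwt]
  refine add_mem (sub_mem ?_ (Submodule.smul_mem _ _ (prod_mem_lowerSpan _ ?_)))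
    (Submodule.smul_mem _ _ (prod_mem_lowerSpan _ ?_))
  · obtain ⟨l, hl⟩ | hl := Fin.eq_castSucc_or_eq_last j.succ
    · rw [hl, Fin.snoc_castSucc, ← Multiset.prod_cons, ← Multiset.map_cons]
      refine prod_mem_lowerSpan _ ?_
      rw [Multiset.map_cons, Multiset.sum_cons, Multiset.map_cons, Multiset.sum_cons, ← add_assoc]
      exact Nat.add_lt_add_right
        (weight_add_weight_lt_weight_add_weight hik hkj (congrArg Fin.val hl)) _
    · rw [hl, Fin.snoc_last, zero_mul]
      exact zero_mem _
  · rw [Multiset.map_cons, Multiset.sum_cons]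
    gcongr
    exact weight_lt_weight_add_weight hik hkj
  · rw [Multiset.map_cons, Multiset.sum_cons]
    gcongr
    exact lt_add_of_pos_left _ (weight_pos k)

lemma prod_x_mem_lowerSpan_of_adj (h : G.Adj i j) (hik : (i : ℕ) + 1 = k) (hkj : k ≤ j) :
    (Multiset.map (x K G) {k, j}).prod ∈
      lowerSpan (MvPolynomial (Fin (n + 1)) K) (x K G) weight
        (Multiset.map weight {k, j}).sum :=
  prod_x_mem_lowerSpan_of_mul_x_mul_y_eq (m := 0) hik hkj (by rw [x_mul_y_eq h])

/-- The relation used is `x v * f_{ij} = x i * f_{vj} - x j * f_{vi}`. -/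
lemma prod_x_mem_lowerSpan_of_adj_of_adj {v : Fin n} (hi : G.Adj v i) (hj : G.Adj v j)
    (hik : (i : ℕ) + 1 = k) (hkj : k ≤ j) :
    (Multiset.map (x K G) {k, j, v}).prod ∈
      lowerSpan (MvPolynomial (Fin (n + 1)) K) (x K G) weight
        (Multiset.map weight {k, j, v}).sum := by
  refine prod_x_mem_lowerSpan_of_mul_x_mul_y_eq (m := {v}) hik hkj ?_
  rw [Multiset.map_singleton, Multiset.prod_singleton]
  linear_combination x K G i * x_mul_y_eq (K := K) hj - x K G j * x_mul_y_eq (K := K) hi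

end LeadingMonomials

section Points

variable {K : Type*} [Field K] {n : ℕ} {G : SimpleGraph (Fin n)} {L : Type*} [CommRing L]
  [Algebra K L] [Algebra (MvPolynomial (Fin (n + 1)) K) L]
  [IsScalarTower K (MvPolynomial (Fin (n + 1)) K) L]

lemma exists_algHom_apply_x {a b : Fin n → L} (hadj : ∀ i j, G.Adj i j → a i * b j = a j * b i)
    (hparam : ∀ k, shiftDiff a b k = algebraMap (MvPolynomial (Fin (n + 1)) K) L (X k)) :
    ∃ φ : EdgeRing K G →ₐ[MvPolynomial (Fin (n + 1)) K] L, ∀ i, φ (x K G i) = a i := by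
  have hle : binomialEdgeIdeal K G ≤ RingHom.ker (aeval (R := K) (Sum.elim a b)) := by
    refine Ideal.span_le.mpr ?_
    rintro _ ⟨i, j, h, rfl⟩
    simp [hadj i j h]
  let φ : EdgeRing K G →ₐ[K] L :=
    Ideal.Quotient.liftₐ (binomialEdgeIdeal K G) (aeval (Sum.elim a b)) hle
  have hx (i : Fin n) : φ (x K G i) = a i := aeval_X (Sum.elim a b) (Sum.inl i)
  have hy (i : Fin n) : φ (y K G i) = b i := aeval_X (Sum.elim a b) (Sum.inr i)
  have hφ : φ.comp (IsScalarTower.toAlgHom K (MvPolynomial (Fin (n + 1)) K) (EdgeRing K G)) =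
      IsScalarTower.toAlgHom K (MvPolynomial (Fin (n + 1)) K) L := by
    refine MvPolynomial.algHom_ext fun k ↦ ?_
    simp only [AlgHom.comp_apply, IsScalarTower.coe_toAlgHom', algebraMap_X, ← hparam]
    rw [map_shiftDiff, funext hx, funext hy]
  exact ⟨{ φ with commutes' := DFunLike.congr_fun hφ }, hx⟩

end Points

end EdgeRing

section GenericRoots

variable {K L : Type*} [Field K] [Field L] [Algebra K L] {n s e : ℕ} {c : ℕ → L}

/-- The roots of the polynomial with coefficients `c s, …, c (s + e + 1)`. -/
abbrev HornerRoot (c : ℕ → L) (s e : ℕ) : Type _ := {μ // horner (fun j ↦ c (s + j)) μ (e + 1) = 0}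

lemma exists_transcendental_of_algebraicIndependent
    (hc : AlgebraicIndependent K fun i : Fin (n + 1) ↦ c i) (hn : s + e < n) :
    ∃ F : Subalgebra K L, (∀ j ≤ e, c (s + j) ∈ F) ∧ Transcendental F (c (s + (e + 1))) := by
  let last : Fin (n + 1) := ⟨s + (e + 1), by lia⟩
  refine ⟨Algebra.adjoin K ((fun i : Fin (n + 1) ↦ c i) '' {last}ᶜ), fun j hj ↦ ?_, ?_⟩
  · refine Algebra.subset_adjoin ⟨⟨s + j, by lia⟩, fun h ↦ ?_, rfl⟩
    have := congrArg Fin.val h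
    simp only [last] at this
    lia
  · exact hc.transcendental_adjoin (i := last) fun h ↦ h rfl

lemma horner_ne_zero_of_hornerRoot (hc : AlgebraicIndependent K fun i : Fin (n + 1) ↦ c i)
    (hn : s + e < n) (μ : HornerRoot c s e) {d : ℕ} (hd : d ≤ e) :
    horner (fun j ↦ c (s + j)) μ d ≠ 0 := by
  obtain ⟨F, hF, htr⟩ := exists_transcendental_of_algebraicIndependent hc hn
  exact horner_ne_zero (transcendental_of_horner_eq_zero hF htr μ.2)
    (fun j hj ↦ hF j (hj.trans hd)) (hc.ne_zero ⟨s, by lia⟩)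

lemma card_hornerRoot [IsAlgClosed L] (hc : AlgebraicIndependent K fun i : Fin (n + 1) ↦ c i)
    (hn : s + e < n) : Nat.card (HornerRoot c s e) = e + 1 := by
  obtain ⟨F, hF, htr⟩ := exists_transcendental_of_algebraicIndependent hc hn
  exact card_horner_eq_zero hF htr (hc.ne_zero ⟨s, by lia⟩) (hc.ne_zero ⟨s + e, by lia⟩)

end GenericRoots

/-- A cut of `G` leaving only isolated vertices and one interval `[start, start + extent]` of at
least two vertices. The components of the remaining graph follow each other along `Fin n`, separated
by single cut vertices, and `n` itself is counted as a cut vertex. -/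
structure IntervalCut {n : ℕ} (G : SimpleGraph (Fin n)) where
  cut : Finset ℕ
  start : ℕ
  extent : ℕ
  zero_notMem : 0 ∉ cut := by decide
  last_mem : n ∈ cut := by decide
  start_add_extent_lt : start + extent < n := by decide
  extent_pos : 0 < extent := by decide
  notMem_of_mem_Icc : ∀ k ∈ Finset.Icc start (start + extent), k ∉ cut := by decide
  succ_mem_iff : ∀ k < n, k + 1 ∈ cut ↔ k ∉ cut ∧ k ∉ Finset.Ico start (start + extent) := by decide
  adj : ∀ i j : Fin n, G.Adj i j → ↑i ∈ cut ∨ ↑j ∈ cut ∨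
    (↑i ∈ Finset.Icc start (start + extent) ∧ ↑j ∈ Finset.Icc start (start + extent)) := by decide

namespace IntervalCut

variable {n : ℕ} {G : SimpleGraph (Fin n)} (T : IntervalCut G)

section Coordinates

variable {L : Type*} [CommRing L] (c : ℕ → L) (μ : L)

/-- The `x`-coordinates of the point of slope `y / x = μ` along the interval of `T` whose
parameters `x k - y (k - 1)` are `c k`. -/
def xCoord (k : ℕ) : L :=
  if k ∈ T.cut then 0
  else if k ∈ Finset.Icc T.start (T.start + T.extent) then
    horner (fun j ↦ c (T.start + j)) μ (k - T.start)
  else c k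

/-- The `y`-coordinates of the point with `x`-coordinates `xCoord`. -/
def yCoord (k : ℕ) : L :=
  if k ∈ T.cut then 0
  else if k ∈ Finset.Icc T.start (T.start + T.extent) then μ * T.xCoord c μ k
  else -c (k + 1)

variable {T c μ} {k : ℕ}

lemma xCoord_of_mem_cut (hk : k ∈ T.cut) : T.xCoord c μ k = 0 := if_pos hk

lemma yCoord_of_mem_cut (hk : k ∈ T.cut) : T.yCoord c μ k = 0 := if_pos hk

lemma xCoord_of_mem_Icc (hk : k ∈ Finset.Icc T.start (T.start + T.extent)) :
    T.xCoord c μ k = horner (fun j ↦ c (T.start + j)) μ (k - T.start) := by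
  rw [xCoord, if_neg (T.notMem_of_mem_Icc k hk), if_pos hk]

lemma yCoord_of_mem_Icc (hk : k ∈ Finset.Icc T.start (T.start + T.extent)) :
    T.yCoord c μ k = μ * T.xCoord c μ k := by
  rw [yCoord, if_neg (T.notMem_of_mem_Icc k hk), if_pos hk]

variable (T c μ) in
lemma xCoord_start : T.xCoord c μ T.start = c T.start := by
  rw [xCoord_of_mem_Icc (by simp), Nat.sub_self]
  rfl

lemma xCoord_eq_of_notMem_Ioc (hk : k ∉ T.cut)
    (hk' : k ∉ Finset.Ioc T.start (T.start + T.extent)) : T.xCoord c μ k = c k := by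
  by_cases hstart : k = T.start
  · rw [hstart, xCoord_start]
  · rw [xCoord, if_neg hk, if_neg (by simp only [Finset.mem_Icc, Finset.mem_Ioc] at *; lia)]

lemma xCoord_succ_of_mem_Ico (hk : k ∈ Finset.Ico T.start (T.start + T.extent)) :
    T.xCoord c μ (k + 1) = μ * T.xCoord c μ k + c (k + 1) := by
  obtain ⟨d, rfl⟩ := Nat.exists_eq_add_of_le (Finset.mem_Ico.mp hk).1
  simp only [Finset.mem_Ico] at hk
  rw [xCoord_of_mem_Icc (by simp only [Finset.mem_Icc]; lia),
    xCoord_of_mem_Icc (by simp only [Finset.mem_Icc]; lia), add_assoc, Nat.add_sub_cancel_left,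
    Nat.add_sub_cancel_left]
  rfl

lemma mul_xCoord_end_add (hμ : horner (fun j ↦ c (T.start + j)) μ (T.extent + 1) = 0) :
    μ * T.xCoord c μ (T.start + T.extent) + c (T.start + T.extent + 1) = 0 := by
  rw [xCoord_of_mem_Icc (by simp), Nat.add_sub_cancel_left]
  exact hμ

lemma xCoord_succ (hμ : horner (fun j ↦ c (T.start + j)) μ (T.extent + 1) = 0) (hk : k < n) :
    T.xCoord c μ (k + 1) = T.yCoord c μ k + c (k + 1) := by
  have hsucc := T.succ_mem_iff k hk
  by_cases hcut : k ∈ T.cut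
  · have hIoc : k + 1 ∉ Finset.Ioc T.start (T.start + T.extent) := fun h ↦
      T.notMem_of_mem_Icc k (by simp only [Finset.mem_Icc, Finset.mem_Ioc] at *; lia) hcut
    rw [yCoord_of_mem_cut hcut, xCoord_eq_of_notMem_Ioc (by tauto) hIoc, zero_add]
  by_cases hIco : k ∈ Finset.Ico T.start (T.start + T.extent)
  · rw [yCoord_of_mem_Icc (Finset.Ico_subset_Icc_self hIco), xCoord_succ_of_mem_Ico hIco]
  rw [xCoord_of_mem_cut (by tauto)]
  by_cases hend : k = T.start + T.extent
  · rw [hend, yCoord_of_mem_Icc (by simp), mul_xCoord_end_add hμ]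
  · rw [yCoord, if_neg hcut, if_neg (by simp only [Finset.mem_Icc, Finset.mem_Ico] at *; lia),
      neg_add_cancel]

lemma shiftDiff_xCoord_yCoord (hμ : horner (fun j ↦ c (T.start + j)) μ (T.extent + 1) = 0)
    (k : Fin (n + 1)) :
    shiftDiff (fun i : Fin n ↦ T.xCoord c μ i) (fun i : Fin n ↦ T.yCoord c μ i) k = c k := by
  have hsnoc : Fin.snoc (α := fun _ ↦ L) (fun i : Fin n ↦ T.xCoord c μ i) 0 k =
      T.xCoord c μ k := by
    refine Fin.lastCases ?_ (fun i ↦ ?_) k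
    · rw [Fin.snoc_last, Fin.val_last, xCoord_of_mem_cut T.last_mem]
    · rw [Fin.snoc_castSucc, Fin.val_castSucc]
  rw [shiftDiff, hsnoc]
  refine Fin.cases ?_ (fun i ↦ ?_) k
  · rw [Fin.cons_zero, sub_zero, Fin.val_zero, xCoord_eq_of_notMem_Ioc T.zero_notMem (by simp)]
  · rw [Fin.cons_succ, Fin.val_succ, xCoord_succ hμ i.2, add_sub_cancel_left]

variable (T c μ) in
lemma xCoord_mul_yCoord_of_adj (i j : Fin n) (h : G.Adj i j) :
    T.xCoord c μ i * T.yCoord c μ j = T.xCoord c μ j * T.yCoord c μ i := by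
  obtain hi | hj | ⟨hi, hj⟩ := T.adj i j h
  · rw [xCoord_of_mem_cut hi, yCoord_of_mem_cut hi, zero_mul, mul_zero]
  · rw [xCoord_of_mem_cut hj, yCoord_of_mem_cut hj, zero_mul, mul_zero]
  · rw [yCoord_of_mem_Icc hi, yCoord_of_mem_Icc hj]
    ring

end Coordinates

variable {K L : Type*} [Field K] [Field L] [Algebra K L] {c : ℕ → L}

lemma xCoord_eq_zero_iff (hc : AlgebraicIndependent K fun i : Fin (n + 1) ↦ c i)
    (μ : HornerRoot c T.start T.extent) {k : ℕ} (hk : k < n) :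
    T.xCoord c μ.1 k = 0 ↔ k ∈ T.cut := by
  refine ⟨not_imp_not.mp fun hcut ↦ ?_, xCoord_of_mem_cut⟩
  by_cases hIcc : k ∈ Finset.Icc T.start (T.start + T.extent)
  · rw [xCoord_of_mem_Icc hIcc]
    exact horner_ne_zero_of_hornerRoot hc T.start_add_extent_lt μ
      (Nat.sub_le_iff_le_add'.mpr (Finset.mem_Icc.mp hIcc).2)
  · rw [xCoord, if_neg hcut, if_neg hIcc]
    exact hc.ne_zero ⟨k, by lia⟩

lemma eq_of_xCoord_eq (hc : AlgebraicIndependent K fun i : Fin (n + 1) ↦ c i) {μ ν : L}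
    (h : ∀ k < n, T.xCoord c μ k = T.xCoord c ν k) : μ = ν := by
  have hlt := T.start_add_extent_lt
  have hpos := T.extent_pos
  have hstart : T.start ∈ Finset.Ico T.start (T.start + T.extent) := by
    simp only [Finset.mem_Ico]; lia
  have hsucc := h (T.start + 1) (by lia)
  rw [xCoord_succ_of_mem_Ico hstart, xCoord_succ_of_mem_Ico hstart, xCoord_start, xCoord_start,
    add_left_inj] at hsucc
  exact mul_right_cancel₀ (hc.ne_zero ⟨T.start, by lia⟩) hsucc

end IntervalCut

section CohenMacaulay

variable {K : Type*} [Field K] {n : ℕ} {G : SimpleGraph (Fin n)}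

lemma isCMQuot_binomialEdgeIdeal_of_free [Nontrivial (EdgeRing K G)]
    [Module.Finite (MvPolynomial (Fin (n + 1)) K) (EdgeRing K G)]
    [Module.Free (MvPolynomial (Fin (n + 1)) K) (EdgeRing K G)] :
    IsCMQuot (binomialEdgeIdeal K G) :=
  ringDepth_eq_ringKrullDim_of_finite_free _ (EdgeRing.algebraMap_X_mem_gradedMaxQuot K G)

section Points

variable {ι L : Type*} {T : ι → IntervalCut G} [Field L] [Algebra K L]
  [Algebra (MvPolynomial (Fin (n + 1)) K) L] [IsScalarTower K (MvPolynomial (Fin (n + 1)) K) L]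
  [FaithfulSMul (MvPolynomial (Fin (n + 1)) K) L] {c : ℕ → L}

lemma algebraicIndependent_of_eq_algebraMap_X
    (hcX : ∀ k : Fin (n + 1), c k = algebraMap (MvPolynomial (Fin (n + 1)) K) L (X k)) :
    AlgebraicIndependent K fun k : Fin (n + 1) ↦ c k := by
  have hX := (algebraicIndependent_X (Fin (n + 1)) K).map'
    (f := IsScalarTower.toAlgHom K (MvPolynomial (Fin (n + 1)) K) L)
    (FaithfulSMul.algebraMap_injective _ _)
  rwa [funext hcX]

lemma exists_injective_algHom (hT : ∀ i j, (∀ k < n, k ∈ (T i).cut ↔ k ∈ (T j).cut) → i = j)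
    (hcX : ∀ k : Fin (n + 1), c k = algebraMap (MvPolynomial (Fin (n + 1)) K) L (X k)) :
    ∃ φ : (Σ i, HornerRoot c (T i).start (T i).extent) →
      EdgeRing K G →ₐ[MvPolynomial (Fin (n + 1)) K] L, Function.Injective φ := by
  have hc := algebraicIndependent_of_eq_algebraMap_X hcX
  have hpoint (p : Σ i, HornerRoot c (T i).start (T i).extent) :=
    EdgeRing.exists_algHom_apply_x ((T p.1).xCoord_mul_yCoord_of_adj c p.2.1)
      fun k ↦ (IntervalCut.shiftDiff_xCoord_yCoord p.2.2 k).trans (hcX k)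
  choose φ hφ using hpoint
  refine ⟨φ, fun p q hpq ↦ ?_⟩
  have hx (k : ℕ) (hk : k < n) : (T p.1).xCoord c p.2.1 k = (T q.1).xCoord c q.2.1 k := by
    rw [← hφ p ⟨k, hk⟩, hpq, hφ]
  obtain ⟨i, μ⟩ := p
  obtain ⟨j, ν⟩ := q
  obtain rfl : i = j := hT i j fun k hk ↦ by
    rw [← (T i).xCoord_eq_zero_iff hc μ hk, ← (T j).xCoord_eq_zero_iff hc ν hk, hx k hk]
  obtain rfl : μ = ν := Subtype.ext ((T i).eq_of_xCoord_eq hc hx)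
  rfl

end Points

theorem isCMQuot_binomialEdgeIdeal_of_intervalCuts {ι : Type*} [Fintype ι] [Nonempty ι]
    {T : ι → IntervalCut G} (hT : ∀ i j, (∀ k < n, k ∈ (T i).cut ↔ k ∈ (T j).cut) → i = j)
    {lead : Finset (Multiset (Fin n))}
    (hlead : ∀ u ∈ lead, (u.map (EdgeRing.x K G)).prod ∈
      lowerSpan (MvPolynomial (Fin (n + 1)) K) (EdgeRing.x K G) EdgeRing.weight
        (u.map EdgeRing.weight).sum)
    (hsq : ∀ i, ∃ u ∈ lead, u ≤ {i, i})
    (hcard : Nat.card {s : Finset (Fin n) // ∀ u ∈ lead, ¬ u ≤ s.val} ≤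
      ∑ i, ((T i).extent + 1)) :
    IsCMQuot (binomialEdgeIdeal K G) := by
  let A := MvPolynomial (Fin (n + 1)) K
  let L := AlgebraicClosure (FractionRing A)
  have : FaithfulSMul A L := FaithfulSMul.trans A (FractionRing A) L
  let c (k : ℕ) : L := algebraMap A L (X (Fin.ofNat (n + 1) k))
  have hcX (k : Fin (n + 1)) : c k = algebraMap A L (X k) := by simp [c]
  have hcardRoot (i : ι) : Nat.card (HornerRoot c (T i).start (T i).extent) = (T i).extent + 1 :=
    card_hornerRoot (algebraicIndependent_of_eq_algebraMap_X hcX) (T i).start_add_extent_lt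
  have (i : ι) : Finite (HornerRoot c (T i).start (T i).extent) :=
    Nat.finite_of_card_ne_zero (by rw [hcardRoot]; exact Nat.succ_ne_zero _)
  obtain ⟨φ, hφ⟩ := exists_injective_algHom hT hcX
  have hspan := span_squarefree_standardMonomials_eq_top (EdgeRing.adjoin_range_x K G) hlead hsq
  have hli := linearIndependent_of_span_eq_top_of_card_le hspan.ge hφ
    (by simpa only [Nat.card_sigma, hcardRoot] using hcard)
  have := Module.Free.of_basis (Module.Basis.mk hli hspan.ge)
  have := Module.Finite.of_basis (Module.Basis.mk hli hspan.ge)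
  obtain ⟨i⟩ := ‹Nonempty ι›
  obtain ⟨μ⟩ : Nonempty (HornerRoot c (T i).start (T i).extent) :=
    (Nat.card_pos_iff.mp (by rw [hcardRoot]; exact Nat.succ_pos _)).1
  have := (φ ⟨i, μ⟩).toRingHom.domain_nontrivial
  exact isCMQuot_binomialEdgeIdeal_of_free

end CohenMacaulay

section Fan

instance : DecidableRel fanGraph.Adj := fun a b ↦
  decidable_of_iff _ (SimpleGraph.fromRel_adj _ a b).symm

/-- One cut for each minimal prime of the binomial edge ideal of the fan graph. -/
def fanCuts : Fin 5 → IntervalCut fanGraph := ![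
  { cut := {6}, start := 0, extent := 5 },
  { cut := {1, 6}, start := 2, extent := 3 },
  { cut := {4, 6}, start := 0, extent := 3 },
  { cut := {1, 3, 6}, start := 4, extent := 1 },
  { cut := {1, 4, 6}, start := 2, extent := 1 }]

/-- The leading monomials of the parameter `x 0`, of the relations of the edges, and of the cubic
relation of the path `2 - 1 - 4`. -/
def fanLeads : Finset (Multiset (Fin 6)) :=
  {{0}, {1, 1}, {2, 2}, {2, 3}, {2, 4}, {3, 3}, {4, 4}, {5, 5}, {3, 4, 1}}

open EdgeRing in
lemma prod_x_mem_lowerSpan_of_mem_fanLeads (K : Type*) [Field K] :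
    ∀ u ∈ fanLeads, (u.map (x K fanGraph)).prod ∈
      lowerSpan (MvPolynomial (Fin 7) K) (x K fanGraph) weight (u.map weight).sum := by
  simp only [fanLeads, Finset.forall_mem_insert, Finset.mem_singleton, forall_eq]
  exact ⟨by simpa using x_zero_mem_lowerSpan,
    prod_x_mem_lowerSpan_of_adj (i := 0) (by decide) rfl (by decide),
    prod_x_mem_lowerSpan_of_adj (i := 1) (by decide) rfl (by decide),
    prod_x_mem_lowerSpan_of_adj (i := 1) (by decide) rfl (by decide),
    prod_x_mem_lowerSpan_of_adj (i := 1) (by decide) rfl (by decide),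
    prod_x_mem_lowerSpan_of_adj (i := 2) (by decide) rfl (by decide),
    prod_x_mem_lowerSpan_of_adj (i := 3) (by decide) rfl (by decide),
    prod_x_mem_lowerSpan_of_adj (i := 4) (by decide) rfl (by decide),
    prod_x_mem_lowerSpan_of_adj_of_adj (i := 2) (by decide) (by decide) rfl (by decide)⟩

end Fan

/-- For the graph with vertex set `{1,…,6}` and edge set
`{{1,2},{2,3},{2,4},{2,5},{3,4},{4,5},{5,6}}`, the ring `S/J_G` is Cohen–Macaulay. -/
theorem isCMQuot_binomialEdgeIdeal_fanGraph (K : Type*) [Field K] :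
    IsCMQuot (binomialEdgeIdeal K fanGraph) :=
  isCMQuot_binomialEdgeIdeal_of_intervalCuts (T := fanCuts) (by decide)
    (prod_x_mem_lowerSpan_of_mem_fanLeads K) (by decide)
    (by rw [Nat.card_eq_fintype_card]; decide)

end
end
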